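/- arXiv:1705.03803 — 3 statements merged into one kernel-verified Lean document; each statement's English description precedes it below -/
import Mathlib

section
/- Let A be maximally monotone on a real Hilbert space H with S = A^{-1}(0) ≠ ∅, α > 2, λ(t) = (1+ε)t²/α² with ε > 2/(α−2), and let x be a C² solution of ẍ(t) + (α/t)ẋ(t) + A_{λ(t)}(x(t)) = 0 on [t₀, ∞), t₀ > 0. Then the trajectory x is bounded, sup_{t≥t₀} t‖ẋ(t)‖ < ∞, sup_{t≥t₀} t²‖ẍ(t)‖ < ∞, and ∫_{t₀}^∞ t‖ẋ(t)‖² dt < ∞. -/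
open scoped RealInnerProductSpace

variable {H : Type*} [NormedAddCommGroup H] [InnerProductSpace ℝ H] [CompleteSpace H]

/-- A set-valued operator `A : H → 2^H` is monotone. -/
def MonotoneOp (A : H → Set H) : Prop :=
  ∀ ⦃x y u v : H⦄, u ∈ A x → v ∈ A y → 0 ≤ ⟪u - v, x - y⟫

/-- A set-valued operator is maximally monotone: monotone and with no proper
monotone extension. -/
def MaximallyMonotone (A : H → Set H) : Prop :=
  MonotoneOp A ∧
    ∀ x u : H, (∀ y v : H, v ∈ A y → 0 ≤ ⟪u - v, x - y⟫) → u ∈ A x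

/-- `J` is the resolvent `(I + lam A)⁻¹` of `A` with index `lam`:
for every `x`, `J x + lam • A (J x) ∋ x`, i.e. `lam⁻¹ • (x - J x) ∈ A (J x)`. -/
def IsResolvent (A : H → Set H) (lam : ℝ) (J : H → H) : Prop :=
  ∀ x : H, lam⁻¹ • (x - J x) ∈ A (J x)

open Set MeasureTheory Filter

/-- A priori estimates: for `α > 2`, `λ(t) = (1+ε)t²/α²` with `ε > 2/(α-2)`,
any `C²` solution of `ẍ + (α/t)ẋ + A_{λ(t)}(x) = 0` is bounded, satisfies
`sup t‖ẋ(t)‖ < ∞`, `sup t²‖ẍ(t)‖ < ∞`, and `∫ t‖ẋ(t)‖² dt < ∞`. -/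
theorem speed_acceleration_decay (A : H → Set H) (hA : MaximallyMonotone A)
    (hS : ∃ z : H, (0 : H) ∈ A z)
    (t₀ α ε : ℝ) (ht₀ : 0 < t₀) (hα : 2 < α) (hε : 2 / (α - 2) < ε)
    (lam : ℝ → ℝ) (hlamdef : ∀ t, lam t = (1 + ε) * t ^ 2 / α ^ 2)
    (J : ℝ → H → H) (hJ : ∀ l : ℝ, 0 < l → IsResolvent A l (J l))
    (x x' x'' : ℝ → H)
    (hx : ∀ t, t₀ ≤ t → HasDerivAt x (x' t) t)
    (hx' : ∀ t, t₀ ≤ t → HasDerivAt x' (x'' t) t)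
    (hode : ∀ t, t₀ ≤ t →
      x'' t + (α / t) • x' t + (lam t)⁻¹ • (x t - J (lam t) (x t)) = 0) :
    (∃ M, ∀ t, t₀ ≤ t → ‖x t‖ ≤ M) ∧
      (∃ C, ∀ t, t₀ ≤ t → t * ‖x' t‖ ≤ C) ∧
      (∃ C, ∀ t, t₀ ≤ t → t ^ 2 * ‖x'' t‖ ≤ C) ∧
      IntegrableOn (fun t => t * ‖x' t‖ ^ 2) (Ici t₀) volume := by
  obtain ⟨z, hz⟩ := hS
  have hα0 : 0 < α := by linarith
  have hα2 : 0 < α - 2 := by linarith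
  have hε0 : 0 < ε := lt_trans (by positivity) hε
  have hε2 : 2 < ε * (α - 2) := (div_lt_iff₀ hα2).1 hε
  have hpos : ∀ t, t₀ ≤ t → 0 < t := fun t ht => lt_of_lt_of_le ht₀ ht
  have hlam : ∀ t, t₀ ≤ t → 0 < lam t := by
    intro t ht
    have := hpos t ht
    rw [hlamdef]; positivity
  obtain ⟨β, hβ⟩ : ∃ β, β = (1 + ε) / α := ⟨_, rfl⟩
  have hβ0 : 0 < β := by rw [hβ]; positivity
  have hβα : β * α = 1 + ε := by rw [hβ]; field_simp
  obtain ⟨δ, hδ⟩ : ∃ δ, δ = ε - 2 * β := ⟨_, rfl⟩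
  have hδ0 : 0 < δ := by
    have : 0 < δ * α := by rw [hδ]; nlinarith
    exact pos_of_mul_pos_left this hα0.le
  have hmono : ∀ t, t₀ ≤ t →
      lam t * ‖x'' t + (α / t) • x' t‖ ^ 2 ≤ - ⟪x'' t + (α / t) • x' t, x t - z⟫ := by
    intro t ht
    have hl := hlam t ht
    have h1 := hA.1 (hJ (lam t) hl (x t)) hz
    have h2 := hode t ht
    obtain ⟨u, hu⟩ : ∃ u, u = (lam t)⁻¹ • (x t - J (lam t) (x t)) := ⟨_, rfl⟩
    rw [← hu] at h1 h2
    have h3 : x'' t + (α / t) • x' t = -u := eq_neg_of_add_eq_zero_left h2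
    have h4 : J (lam t) (x t) = x t - lam t • u := by
      rw [hu, smul_inv_smul₀ hl.ne']; abel
    rw [h3, norm_neg, inner_neg_left, neg_neg]
    rw [h4, sub_zero, show x t - lam t • u - z = (x t - z) - lam t • u by abel,
      inner_sub_right, inner_smul_right, real_inner_self_eq_norm_sq] at h1
    linarith
  let E : ℝ → ℝ := fun t => t * ⟪x' t, x t - z⟫ + (α - 1) / 2 * ⟪x t - z, x t - z⟫
    + β * (t ^ 2 * ⟪x' t, x' t⟫)
  let E' : ℝ → ℝ := fun t => (1 * ⟪x' t, x t - z⟫ + t * (⟪x' t, x' t⟫ + ⟪x'' t, x t - z⟫))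
    + (α - 1) / 2 * (⟪x t - z, x' t⟫ + ⟪x' t, x t - z⟫)
    + β * ((2 * t) * ⟪x' t, x' t⟫ + t ^ 2 * (⟪x' t, x'' t⟫ + ⟪x'' t, x' t⟫))
  have hE : ∀ t, t₀ ≤ t → HasDerivAt E (E' t) t := by
    intro t ht
    have hw : HasDerivAt (fun t => x t - z) (x' t) t := (hx t ht).sub_const z
    have h1 := (hasDerivAt_id t).mul ((hx' t ht).inner ℝ hw)
    have h2 := (hw.inner ℝ hw).const_mul ((α - 1) / 2)
    have h3 : HasDerivAt (fun t : ℝ => t ^ 2) (2 * t) t := by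
      simpa using hasDerivAt_pow 2 t
    have h4 := (h3.mul ((hx' t ht).inner ℝ (hx' t ht))).const_mul β
    exact (h1.add h2).add h4
  have hE' : ∀ t, t₀ ≤ t → E' t ≤ - (δ * (t * ‖x' t‖ ^ 2)) := by
    intro t ht
    have ht0 := hpos t ht
    have h1 := hmono t ht
    have h2 : lam t * ‖x'' t + (α / t) • x' t‖ ^ 2 =
        lam t * ‖x'' t‖ ^ 2 + 2 * (β * t) * ⟪x'' t, x' t⟫ + (1 + ε) * ‖x' t‖ ^ 2 := by
      rw [norm_add_sq_real, inner_smul_right, norm_smul, mul_pow, Real.norm_eq_abs, sq_abs,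
        hlamdef, hβ]
      field_simp
    rw [h2, inner_add_left, inner_smul_left] at h1
    simp only [conj_trivial] at h1
    have h3 : 0 ≤ lam t * ‖x'' t‖ ^ 2 := mul_nonneg (hlam t ht).le (sq_nonneg _)
    have h4 : t * (2 * (β * t) * ⟪x'' t, x' t⟫ + (1 + ε) * ‖x' t‖ ^ 2) ≤
        t * (-(⟪x'' t, x t - z⟫ + α / t * ⟪x' t, x t - z⟫)) :=
      mul_le_mul_of_nonneg_left (by linarith) ht0.le
    have h5 : t * (-(⟪x'' t, x t - z⟫ + α / t * ⟪x' t, x t - z⟫)) =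
        - (t * ⟪x'' t, x t - z⟫) - α * ⟪x' t, x t - z⟫ := by
      field_simp
      ring
    rw [h5] at h4
    simp only [E', real_inner_self_eq_norm_sq, real_inner_comm (x' t) (x t - z),
      real_inner_comm (x'' t) (x' t)] at h4 ⊢
    rw [hδ]
    linarith
  have anti : ∀ f f' : ℝ → ℝ, (∀ t, t₀ ≤ t → HasDerivAt f (f' t) t) →
      (∀ t, t₀ ≤ t → f' t ≤ 0) → ∀ t, t₀ ≤ t → f t ≤ f t₀ := by
    intro f f' hf hf' t ht
    have : AntitoneOn f (Ici t₀) := by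
      refine antitoneOn_of_hasDerivWithinAt_nonpos (f' := f') (convex_Ici t₀)
        (fun s hs => (hf s hs).continuousAt.continuousWithinAt) ?_ ?_
      · intro s hs
        exact (hf s (interior_subset hs)).hasDerivWithinAt
      · intro s hs
        exact hf' s (interior_subset hs)
    exact this self_mem_Ici ht ht
  have hEle : ∀ t, t₀ ≤ t → E t ≤ E t₀ := by
    refine anti E E' hE fun t ht => (hE' t ht).trans ?_
    have := hpos t ht
    rw [neg_nonpos]; positivity
  -- boundedness of the trajectory
  obtain ⟨K, hK⟩ : ∃ K, K = E t₀ / ((α - 1) / 2) := ⟨_, rfl⟩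
  have hα1 : 0 < α - 1 := by linarith
  have hKE : (α - 1) / 2 * K = E t₀ := by rw [hK]; field_simp
  have hbd : ∀ t, t₀ ≤ t → ‖x t - z‖ ^ 2 ≤ K + |‖x t₀ - z‖ ^ 2 - K| := by
    intro t ht
    have ht0 := hpos t ht
    have key := anti (fun t => t ^ (α - 1) * (⟪x t - z, x t - z⟫ - K))
      (fun t => ((α - 1) * t ^ (α - 1 - 1)) * (⟪x t - z, x t - z⟫ - K)
        + t ^ (α - 1) * (⟪x t - z, x' t⟫ + ⟪x' t, x t - z⟫)) ?_ ?_ t ht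
    · simp only [real_inner_self_eq_norm_sq] at key
      have hp : 0 < t ^ (α - 1) := Real.rpow_pos_of_pos ht0 _
      have hle : t₀ ^ (α - 1) ≤ t ^ (α - 1) := Real.rpow_le_rpow ht₀.le ht hα1.le
      have h0 : 0 < t₀ ^ (α - 1) := Real.rpow_pos_of_pos ht₀ _
      have h1 : t₀ ^ (α - 1) * (‖x t₀ - z‖ ^ 2 - K) ≤
          t ^ (α - 1) * |‖x t₀ - z‖ ^ 2 - K| :=
        (mul_le_mul_of_nonneg_left (le_abs_self _) h0.le).trans
          (mul_le_mul_of_nonneg_right hle (abs_nonneg _))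
      have := le_of_mul_le_mul_left (key.trans h1) hp
      linarith
    · intro s hs
      have hs0 := hpos s hs
      have hw : HasDerivAt (fun t => x t - z) (x' s) s := (hx s hs).sub_const z
      exact (Real.hasDerivAt_rpow_const (Or.inl hs0.ne')).mul ((hw.inner ℝ hw).sub_const K)
    · intro s hs
      have hs0 := hpos s hs
      have h1 : s ^ (α - 1) = s ^ (α - 1 - 1) * s := by
        rw [← Real.rpow_add_one hs0.ne']; congr 1; ring
      have h2 : 0 < s ^ (α - 1 - 1) := Real.rpow_pos_of_pos hs0 _
      have h3 := hEle s hs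
      rw [← hKE] at h3
      simp only [E] at h3
      have h4 : 0 ≤ β * (s ^ 2 * ⟪x' s, x' s⟫) := by
        rw [real_inner_self_eq_norm_sq]; positivity
      have h5 : ((α - 1) * s ^ (α - 1 - 1)) * (⟪x s - z, x s - z⟫ - K)
        + s ^ (α - 1) * (⟪x s - z, x' s⟫ + ⟪x' s, x s - z⟫) =
        s ^ (α - 1 - 1) * (2 * (s * ⟪x' s, x s - z⟫ + (α - 1) / 2 * ⟪x s - z, x s - z⟫
          - (α - 1) / 2 * K)) := by
        rw [h1, real_inner_comm (x' s) (x s - z)]; ring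
      change ((α - 1) * s ^ (α - 1 - 1)) * (⟪x s - z, x s - z⟫ - K)
        + s ^ (α - 1) * (⟪x s - z, x' s⟫ + ⟪x' s, x s - z⟫) ≤ 0
      rw [h5]
      exact mul_nonpos_of_nonneg_of_nonpos h2.le (by linarith)
  obtain ⟨M, hM0, hM⟩ : ∃ M, 0 ≤ M ∧ ∀ t, t₀ ≤ t → ‖x t - z‖ ≤ M :=
    ⟨_, Real.sqrt_nonneg _, fun t ht => Real.le_sqrt_of_sq_le (hbd t ht)⟩
  have hin : ∀ t, t₀ ≤ t → -(t * ‖x' t‖ * M) ≤ t * ⟪x' t, x t - z⟫ := by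
    intro t ht
    have ht0 := hpos t ht
    have h1 := neg_le_of_abs_le (abs_real_inner_le_norm (x' t) (x t - z))
    have h2 : ‖x' t‖ * ‖x t - z‖ ≤ ‖x' t‖ * M :=
      mul_le_mul_of_nonneg_left (hM t ht) (norm_nonneg _)
    have h3 := mul_le_mul_of_nonneg_left (show -(‖x' t‖ * M) ≤ ⟪x' t, x t - z⟫ by linarith) ht0.le
    linarith
  obtain ⟨C, hC0, hC⟩ : ∃ C, 0 ≤ C ∧ ∀ t, t₀ ≤ t → t * ‖x' t‖ ≤ C := by
    refine ⟨(|E t₀| + M) / β + 1, by positivity, fun t ht => ?_⟩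
    have ht0 := hpos t ht
    have h1 := hin t ht
    have h2 := (hEle t ht).trans (le_abs_self _)
    simp only [E, real_inner_self_eq_norm_sq] at h2
    have h3 : 0 ≤ (α - 1) / 2 * ‖x t - z‖ ^ 2 := by positivity
    have hs : 0 ≤ t * ‖x' t‖ := by positivity
    have h4 : β * (t * ‖x' t‖) ^ 2 ≤ |E t₀| + t * ‖x' t‖ * M := by
      simp only [E, real_inner_self_eq_norm_sq]
      rw [mul_pow]; linarith
    by_contra! hcon
    have h5 : 1 ≤ t * ‖x' t‖ := by
      have : 0 ≤ (|E t₀| + M) / β := by positivity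
      linarith
    have h6 : (|E t₀| + M) / β < t * ‖x' t‖ := by linarith
    rw [div_lt_iff₀ hβ0] at h6
    generalize t * ‖x' t‖ = s at *
    have h7 := abs_nonneg (E t₀)
    have h8 : s * (|E t₀| + M) < s * (s * β) := mul_lt_mul_of_pos_left h6 (by linarith)
    have h9 : |E t₀| * 1 ≤ |E t₀| * s := mul_le_mul_of_nonneg_left h5 h7
    linarith
  refine ⟨⟨M + ‖z‖, fun t ht => ?_⟩, ⟨C, hC⟩, ⟨α * C + α ^ 2 / (1 + ε) * M, fun t ht => ?_⟩, ?_⟩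
  · have h1 := norm_add_le (x t - z) z
    rw [sub_add_cancel] at h1
    linarith [hM t ht]
  · have ht0 := hpos t ht
    have h1 := hmono t ht
    have h2 := neg_le_of_abs_le (abs_real_inner_le_norm (x'' t + (α / t) • x' t) (x t - z))
    have h3 : lam t * ‖x'' t + (α / t) • x' t‖ ≤ M := by
      rcases (norm_nonneg (x'' t + (α / t) • x' t)).eq_or_lt with h | h
      · rw [← h, mul_zero]; exact hM0
      · refine le_trans ?_ (hM t ht)
        refine le_of_mul_le_mul_left ?_ h
        linarith
    have h4 : ‖x'' t‖ ≤ ‖x'' t + (α / t) • x' t‖ + α / t * ‖x' t‖ := by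
      have := norm_sub_le (x'' t + (α / t) • x' t) ((α / t) • x' t)
      rwa [add_sub_cancel_right, norm_smul, Real.norm_of_nonneg (by positivity)] at this
    have h5 : t ^ 2 * ‖x'' t + (α / t) • x' t‖ =
        α ^ 2 / (1 + ε) * (lam t * ‖x'' t + (α / t) • x' t‖) := by
      rw [hlamdef]; field_simp
    have h6 : α ^ 2 / (1 + ε) * (lam t * ‖x'' t + (α / t) • x' t‖) ≤ α ^ 2 / (1 + ε) * M :=
      mul_le_mul_of_nonneg_left h3 (by positivity)
    have h7 : t ^ 2 * (α / t * ‖x' t‖) = α * (t * ‖x' t‖) := by field_simp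
    have h8 : α * (t * ‖x' t‖) ≤ α * C := mul_le_mul_of_nonneg_left (hC t ht) hα0.le
    calc t ^ 2 * ‖x'' t‖ ≤ t ^ 2 * (‖x'' t + (α / t) • x' t‖ + α / t * ‖x' t‖) :=
          mul_le_mul_of_nonneg_left h4 (by positivity)
      _ ≤ _ := by rw [mul_add, h5, h7]; linarith
  · rw [integrableOn_Ici_iff_integrableOn_Ioi]
    have hcont : ContinuousOn (fun t => t * ‖x' t‖ ^ 2) (Ici t₀) := by
      have : ContinuousOn x' (Ici t₀) := fun s hs => (hx' s hs).continuousAt.continuousWithinAt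
      exact continuousOn_id.mul (this.norm.pow 2)
    have hint : ∀ T, IntegrableOn (fun t => t * ‖x' t‖ ^ 2) (Icc t₀ T) :=
      fun T => (hcont.mono Icc_subset_Ici_self).integrableOn_Icc
    refine integrableOn_Ioi_of_intervalIntegral_norm_bounded (l := atTop) (b := id)
      ((E t₀ + C * M) / δ) t₀ (fun T => (hint T).mono_set Ioc_subset_Icc_self) tendsto_id ?_
    filter_upwards [eventually_ge_atTop t₀] with T hT
    have h1 : ∫ t in t₀..T, δ * (t * ‖x' t‖ ^ 2) ≤ (-E T) - (-E t₀) := by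
      refine intervalIntegral.integral_le_sub_of_hasDeriv_right_of_le (g := fun t => - E t)
        (g' := fun t => - E' t) hT ?_ ?_ ((hint T).const_mul δ) ?_
      · intro s hs
        exact (hE s hs.1).neg.continuousAt.continuousWithinAt
      · intro s hs
        exact (hE s hs.1.le).neg.hasDerivWithinAt
      · intro s hs
        have := hE' s hs.1.le
        linarith
    rw [intervalIntegral.integral_const_mul] at h1
    have h2 : ∫ t in t₀..id T, ‖t * ‖x' t‖ ^ 2‖ = ∫ t in t₀..T, t * ‖x' t‖ ^ 2 := by
      refine intervalIntegral.integral_congr fun s hs => ?_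
      rw [id, uIcc_of_le hT] at hs
      have := hpos s hs.1
      exact Real.norm_of_nonneg (by positivity)
    rw [h2, le_div_iff₀ hδ0]
    have hT0 := hpos T hT
    have h3 : -(C * M) ≤ E T := by
      have h4 := hin T hT
      have h5 := mul_le_mul_of_nonneg_right (hC T hT) hM0
      have h6 : 0 ≤ (α - 1) / 2 * ‖x T - z‖ ^ 2 := by positivity
      have h7 : 0 ≤ β * (T ^ 2 * ‖x' T‖ ^ 2) := by positivity
      simp only [E, real_inner_self_eq_norm_sq]
      linarith
    linarith
end

section
/- Let A be maximally monotone on a real Hilbert space H with S = A^{-1}(0) ≠ ∅, α > 2, λ(t) = (1+ε)t²/α² with ε > 2/(α−2). Then every solution x of ẍ(t) + (α/t)ẋ(t) + A_{λ(t)}(x(t)) = 0 converges weakly, as t → ∞, to a zero of A, and ‖ẋ(t)‖ → 0, ‖ẍ(t)‖ → 0. -/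
open scoped RealInnerProductSpace

variable {H : Type*} [NormedAddCommGroup H] [InnerProductSpace ℝ H] [CompleteSpace H]

open Set Filter

open scoped Topology in
lemma aux_conv (f f' : ℝ → ℝ) (t₀ m : ℝ) (hf : ∀ t, t₀ ≤ t → HasDerivAt f (f' t) t)
    (hf' : ∀ t, t₀ ≤ t → f' t ≤ 0) (hm : ∀ t, t₀ ≤ t → m ≤ f t) :
    AntitoneOn f (Ici t₀) ∧ ∃ l, Tendsto f atTop (𝓝 l) := by
  have hanti : AntitoneOn f (Ici t₀) := by
    apply antitoneOn_of_deriv_nonpos (convex_Ici t₀)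
    · intro t ht
      exact (hf t ht).continuousAt.continuousWithinAt
    · intro t ht
      exact (hf t (interior_subset ht)).differentiableAt.differentiableWithinAt
    · intro t ht
      rw [(hf t (interior_subset ht)).deriv]
      exact hf' t (interior_subset ht)
  refine ⟨hanti, ?_⟩
  have h1 : Antitone (fun t => f (max t t₀)) := by
    intro a b hab
    exact hanti (le_max_right a t₀) (le_max_right b t₀) (max_le_max_right t₀ hab)
  refine ⟨_, (tendsto_atTop_ciInf h1 ⟨m, ?_⟩).congr' ?_⟩
  · rintro _ ⟨t, rfl⟩
    exact hm _ (le_max_right _ _)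
  · filter_upwards [eventually_ge_atTop t₀] with t ht
    rw [max_eq_left ht]

open scoped Topology in
lemma aux_opial (x : ℝ → H) (S : Set H) (hS : S.Nonempty)
    (hconv : ∀ z ∈ S, ∃ l, Tendsto (fun t => ‖x t - z‖ ^ 2) atTop (𝓝 l))
    (M : ℝ) (hM : ∀ᶠ t in atTop, ‖x t‖ ≤ M)
    (hcl : ∀ U : Ultrafilter ℝ, (U : Filter ℝ) ≤ atTop → ∀ p : H,
      (∀ y : H, Tendsto (fun t => ⟪x t, y⟫) U (𝓝 ⟪p, y⟫)) → p ∈ S) :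
    ∃ p ∈ S, ∀ y : H, Tendsto (fun t => ⟪x t, y⟫) atTop (𝓝 ⟪p, y⟫) := by
  have key : ∀ U : Ultrafilter ℝ, (U : Filter ℝ) ≤ atTop → ∃ p : H,
      (∀ y : H, Tendsto (fun t => ⟪x t, y⟫) U (𝓝 ⟪p, y⟫)) := by
    intro U hU
    have hlim : ∀ y : H, ∃ l : ℝ, |l| ≤ M * ‖y‖ ∧ Tendsto (fun t => ⟪x t, y⟫) U (𝓝 l) := by
      intro y
      have hc : IsCompact (Icc (-(M * ‖y‖)) (M * ‖y‖)) := isCompact_Icc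
      have hmem : ∀ᶠ t in (U : Filter ℝ), ⟪x t, y⟫ ∈ Icc (-(M * ‖y‖)) (M * ‖y‖) := by
        filter_upwards [hU hM] with t ht
        have h1 := abs_real_inner_le_norm (x t) y
        have h2 : ‖x t‖ * ‖y‖ ≤ M * ‖y‖ := mul_le_mul_of_nonneg_right ht (norm_nonneg y)
        exact abs_le.mp (h1.trans h2)
      obtain ⟨l, hl, hl2⟩ := hc.ultrafilter_le_nhds (U.map (fun t => ⟪x t, y⟫))
        (by rw [Filter.le_principal_iff]; exact hmem)
      exact ⟨l, abs_le.mpr hl, hl2⟩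
    choose l hl1 hl2 using hlim
    let L : H →ₗ[ℝ] ℝ :=
      { toFun := l
        map_add' := by
          intro y z
          refine tendsto_nhds_unique (hl2 (y + z)) ?_
          simpa [inner_add_right] using (hl2 y).add (hl2 z)
        map_smul' := by
          intro r y
          refine tendsto_nhds_unique (hl2 (r • y)) ?_
          simpa [inner_smul_right] using (hl2 y).const_mul r }
    let L' : H →L[ℝ] ℝ := L.mkContinuous M (fun y => hl1 y)
    refine ⟨(InnerProductSpace.toDual ℝ H).symm L', fun y => ?_⟩
    rw [InnerProductSpace.toDual_symm_apply]
    exact hl2 y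
  have huniq : ∀ p ∈ S, ∀ q ∈ S, ∀ U V : Ultrafilter ℝ, (U : Filter ℝ) ≤ atTop →
      (V : Filter ℝ) ≤ atTop →
      (∀ y : H, Tendsto (fun t => ⟪x t, y⟫) U (𝓝 ⟪p, y⟫)) →
      (∀ y : H, Tendsto (fun t => ⟪x t, y⟫) V (𝓝 ⟪q, y⟫)) → p = q := by
    intro p hp q hq U V hU hV h1 h2
    obtain ⟨a, ha⟩ := hconv p hp
    obtain ⟨b, hb⟩ := hconv q hq
    have h3 : Tendsto (fun t => ⟪x t, p - q⟫) atTop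
        (𝓝 ((b - a + ‖p‖ ^ 2 - ‖q‖ ^ 2) / 2)) := by
      refine ((((hb.sub ha).add_const (‖p‖ ^ 2)).sub_const (‖q‖ ^ 2)).div_const 2).congr ?_
      intro t
      rw [norm_sub_sq_real, norm_sub_sq_real, inner_sub_right]
      ring
    have e1 := tendsto_nhds_unique (h3.mono_left hU) (h1 (p - q))
    have e2 := tendsto_nhds_unique (h3.mono_left hV) (h2 (p - q))
    have : ⟪p - q, p - q⟫ = 0 := by
      rw [inner_sub_left]; linarith
    exact sub_eq_zero.mp (inner_self_eq_zero.mp this)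
  let U₀ : Ultrafilter ℝ := Ultrafilter.of atTop
  have hU₀ : (U₀ : Filter ℝ) ≤ atTop := Ultrafilter.of_le atTop
  obtain ⟨p, hp⟩ := key U₀ hU₀
  have hpS := hcl U₀ hU₀ p hp
  refine ⟨p, hpS, fun y => ?_⟩
  rw [tendsto_iff_ultrafilter]
  intro U hU
  obtain ⟨q, hq⟩ := key U hU
  have hqS := hcl U hU q hq
  rw [huniq p hpS q hqS U₀ U hU₀ hU hp hq]
  exact hq y

open scoped Topology in
lemma aux_energy (t₀ α c ε : ℝ) (ht₀ : 0 < t₀) (hα : 2 < α) (hc : c * α ^ 2 = 1 + ε)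
    (hε : 2 < ε * (α - 2)) (x x' x'' : ℝ → H) (z : H)
    (hx : ∀ t, t₀ ≤ t → HasDerivAt x (x' t) t)
    (hx' : ∀ t, t₀ ≤ t → HasDerivAt x' (x'' t) t)
    (hcoc : ∀ t, t₀ ≤ t → c * t ^ 2 * ‖x'' t + (α / t) • x' t‖ ^ 2 ≤
      - ⟪x'' t + (α / t) • x' t, x t - z⟫) :
    (∃ M, ∀ t, t₀ ≤ t → ‖x t - z‖ ≤ M) ∧
    (∃ l, Tendsto (fun t => ‖x t - z‖ ^ 2) atTop (𝓝 l)) ∧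
    Tendsto (fun t => t * ‖x' t‖) atTop (𝓝 0) ∧
    ∃ s : ℝ → ℝ, (∀ t, t₀ ≤ t → t ≤ s t ∧ s t ≤ 2 * t) ∧
      Tendsto (fun t => s t ^ 2 * ‖x'' (s t)‖) atTop (𝓝 0) := by
  have hε0 : 0 < ε := by
    by_contra h
    push Not at h
    nlinarith
  have hcpos : 0 < c := by
    by_contra h
    push Not at h
    nlinarith [sq_nonneg α]
  set δ : ℝ := ε - 2 * c * α with hδ
  have hδpos : 0 < δ := by
    have : α * δ = ε * (α - 2) - 2 := by rw [hδ]; linear_combination -2 * hc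
    by_contra h
    push Not at h
    nlinarith
  set μ : ℝ := c * α - 1 / (α - 2) with hμ
  have hα2 : 0 < α - 2 := by linarith
  have hμpos : 0 < μ := by
    have : α * (α - 2) * μ = ε * (α - 2) - 2 := by
      rw [hμ]; field_simp; linear_combination (α - 2) * hc
    by_contra h
    push Not at h
    have : 0 < α * (α - 2) := by positivity
    nlinarith
  set E : ℝ → ℝ := fun t => t * ⟪x t - z, x' t⟫ + (α - 1) / 2 * ‖x t - z‖ ^ 2
    + c * α * (t ^ 2 * ‖x' t‖ ^ 2) with hE
  set w : ℝ → ℝ := fun t => t ^ 2 * ‖x' t‖ ^ 2 with hw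
  set w' : ℝ → ℝ := fun t => 2 * t * ‖x' t‖ ^ 2 + t ^ 2 * (2 * ⟪x' t, x'' t⟫) with hw'
  set E' : ℝ → ℝ := fun t => ⟪x t - z, x' t⟫ + t * (⟪x t - z, x'' t⟫ + ⟪x' t, x' t⟫)
    + (α - 1) / 2 * (2 * ⟪x t - z, x' t⟫) + c * α * w' t with hE'
  have hdw : ∀ t, t₀ ≤ t → HasDerivAt w (w' t) t := by
    intro t ht
    have h2 : HasDerivAt (fun t => ‖x' t‖ ^ 2) (2 * ⟪x' t, x'' t⟫) t := (hx' t ht).norm_sq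
    have := (hasDerivAt_pow 2 t).mul h2
    refine HasDerivAt.congr_deriv (f := w) this ?_
    simp [hw']
  have hdE : ∀ t, t₀ ≤ t → HasDerivAt E (E' t) t := by
    intro t ht
    have h0 : HasDerivAt (fun t => x t - z) (x' t) t := (hx t ht).sub_const z
    have h1 : HasDerivAt (fun t => ⟪x t - z, x' t⟫) (⟪x t - z, x'' t⟫ + ⟪x' t, x' t⟫) t :=
      h0.inner ℝ (hx' t ht)
    have h2 : HasDerivAt (fun t => ‖x t - z‖ ^ 2) (2 * ⟪x t - z, x' t⟫) t := h0.norm_sq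
    have := (((hasDerivAt_id t).mul h1).add (h2.const_mul ((α - 1) / 2))).add
      ((hdw t ht).const_mul (c * α))
    refine HasDerivAt.congr_deriv (f := E) this ?_
    simp [hE']
  have hdiss : ∀ t, t₀ ≤ t → E' t ≤ -(δ * (t * ‖x' t‖ ^ 2)) - c * (t ^ 3 * ‖x'' t‖ ^ 2) := by
    intro t ht
    have htp : 0 < t := ht₀.trans_le ht
    have h := mul_le_mul_of_nonneg_left (hcoc t ht) htp.le
    rw [norm_add_sq_real, norm_smul, inner_add_left, real_inner_smul_left,
      real_inner_smul_right, Real.norm_eq_abs, mul_pow, sq_abs] at h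
    have e1 : t * (c * t ^ 2 * (‖x'' t‖ ^ 2 + 2 * (α / t * ⟪x'' t, x' t⟫)
        + (α / t) ^ 2 * ‖x' t‖ ^ 2)) = c * t ^ 3 * ‖x'' t‖ ^ 2
        + 2 * c * α * t ^ 2 * ⟪x'' t, x' t⟫ + (1 + ε) * t * ‖x' t‖ ^ 2 := by
      rw [← hc]; field_simp
    have e2 : t * -(⟪x'' t, x t - z⟫ + α / t * ⟪x' t, x t - z⟫)
        = - (t * ⟪x'' t, x t - z⟫) - α * ⟪x' t, x t - z⟫ := by
      field_simp; ring
    rw [e1, e2] at h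
    simp only [hE', hw', hδ]
    rw [real_inner_self_eq_norm_sq, real_inner_comm (x'' t) (x t - z),
      real_inner_comm (x' t) (x t - z), real_inner_comm (x'' t) (x' t)]
    linarith
  have hlow : ∀ t, t₀ ≤ t → α / 4 * ‖x t - z‖ ^ 2 + μ * w t ≤ E t := by
    intro t ht
    have htp : 0 < t := ht₀.trans_le ht
    have h1 := (abs_le.mp (abs_real_inner_le_norm (x t - z) (x' t))).1
    have h2 := mul_le_mul_of_nonneg_left h1 htp.le
    have h3 : ‖x t - z‖ * (t * ‖x' t‖) ≤
        (α - 2) / 4 * ‖x t - z‖ ^ 2 + 1 / (α - 2) * (t * ‖x' t‖) ^ 2 := by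
      have : (α - 2) / 4 * ‖x t - z‖ ^ 2 + 1 / (α - 2) * (t * ‖x' t‖) ^ 2
        - ‖x t - z‖ * (t * ‖x' t‖)
        = (1 / (α - 2)) * ((α - 2) / 2 * ‖x t - z‖ - t * ‖x' t‖) ^ 2 := by
        field_simp; ring
      have h4 : 0 ≤ (1 / (α - 2)) * ((α - 2) / 2 * ‖x t - z‖ - t * ‖x' t‖) ^ 2 := by positivity
      linarith
    simp only [hE, hw, hμ]
    rw [mul_pow] at h3
    linarith
  have hw0 : ∀ t, 0 ≤ w t := fun t => by positivity
  have hE0 : ∀ t, t₀ ≤ t → 0 ≤ E t := by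
    intro t ht
    refine le_trans ?_ (hlow t ht)
    have := hw0 t
    positivity
  have hdiss0 : ∀ t, t₀ ≤ t → 0 ≤ t * ‖x' t‖ ^ 2 ∧ 0 ≤ t ^ 3 * ‖x'' t‖ ^ 2 := by
    intro t ht
    have htp : 0 < t := ht₀.trans_le ht
    constructor <;> positivity
  obtain ⟨hanti, lE, hlE⟩ := aux_conv E E' t₀ 0 hdE (fun t ht => by
    have := hdiss t ht
    obtain ⟨h1, h2⟩ := hdiss0 t ht
    have := mul_nonneg hδpos.le h1
    have := mul_nonneg hcpos.le h2
    linarith) hE0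
  -- the function `w` converges
  set K : ℝ := 3 / δ + 1 / c with hK
  have hK0 : 0 < K := by positivity
  obtain ⟨-, lw, hlw⟩ := aux_conv (fun t => w t + K * E t) (fun t => w' t + K * E' t) t₀ 0
    (fun t ht => (hdw t ht).add ((hdE t ht).const_mul K)) (fun t ht => by
      have htp : 0 < t := ht₀.trans_le ht
      have h1 := mul_le_mul_of_nonneg_left (hdiss t ht) hK0.le
      obtain ⟨h2, h3⟩ := hdiss0 t ht
      have h4 : 3 ≤ K * δ := by
        have : K * δ = 3 + δ / c := by rw [hK]; field_simp
        have : 0 < δ / c := by positivity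
        linarith
      have h5 : 1 ≤ K * c := by
        have : K * c = 1 + 3 * c / δ := by rw [hK]; field_simp; ring
        have : 0 < 3 * c / δ := by positivity
        linarith
      have h6 := mul_le_mul_of_nonneg_right h4 h2
      have h7 := mul_le_mul_of_nonneg_right h5 h3
      have h8 := (abs_le.mp (abs_real_inner_le_norm (x' t) (x'' t))).2
      have h9 : t ^ 2 * (2 * ⟪x' t, x'' t⟫) ≤ t * ‖x' t‖ ^ 2 + t ^ 3 * ‖x'' t‖ ^ 2 := by
        have a1 : t ^ 2 * (2 * ⟪x' t, x'' t⟫) ≤ t ^ 2 * (2 * (‖x' t‖ * ‖x'' t‖)) := by gcongr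
        have a2 : 0 ≤ t * (‖x' t‖ - t * ‖x'' t‖) ^ 2 := by positivity
        nlinarith
      simp only [hw']
      linarith) (fun t ht => by
      have := hw0 t
      have := mul_nonneg hK0.le (hE0 t ht)
      linarith)
  have hwlim : Tendsto w atTop (𝓝 (lw - K * lE)) := by
    refine (hlw.sub (hlE.const_mul K)).congr fun t => ?_
    ring
  -- choose good times
  have hmvt : ∀ t, ∃ s, t₀ ≤ t → (t ≤ s ∧ s ≤ 2 * t) ∧ t * E' s = E (2 * t) - E t := by
    intro t
    by_cases ht : t₀ ≤ t
    · have htp : 0 < t := ht₀.trans_le ht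
      obtain ⟨s, hs, hs2⟩ := exists_hasDerivAt_eq_slope E E' (show t < 2 * t by linarith)
        (fun r hr => (hdE r (ht.trans hr.1)).continuousAt.continuousWithinAt)
        (fun r hr => hdE r (ht.trans hr.1.le))
      refine ⟨s, fun _ => ⟨⟨hs.1.le, hs.2.le⟩, ?_⟩⟩
      rw [hs2]
      have : 2 * t - t = t := by ring
      rw [this]; field_simp
    · exact ⟨0, fun h => absurd h ht⟩
  choose s hs using hmvt
  have h2t : Tendsto (fun t : ℝ => 2 * t) atTop atTop :=
    tendsto_id.const_mul_atTop (by norm_num)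
  have hsT : Tendsto s atTop atTop := by
    refine tendsto_atTop_mono' _ ?_ tendsto_id
    filter_upwards [eventually_ge_atTop t₀] with t ht using (hs t ht).1.1
  have hDE : Tendsto (fun t => E t - E (2 * t)) atTop (𝓝 0) := by
    simpa using hlE.sub (hlE.comp h2t)
  have hbd : ∀ t, t₀ ≤ t → δ * w (s t) + c * (s t ^ 2 * ‖x'' (s t)‖) ^ 2 ≤
      2 * (E t - E (2 * t)) := by
    intro t ht
    obtain ⟨⟨h1, h2⟩, h3⟩ := hs t ht
    have htp : 0 < t := ht₀.trans_le ht
    have hsp : 0 < s t := htp.trans_le h1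
    have h4 := mul_le_mul_of_nonneg_left (hdiss (s t) (ht.trans h1)) htp.le
    obtain ⟨h5, h6⟩ := hdiss0 (s t) (ht.trans h1)
    have h7 : 0 ≤ δ * (s t * ‖x' (s t)‖ ^ 2) + c * (s t ^ 3 * ‖x'' (s t)‖ ^ 2) := by positivity
    have h8 := mul_le_mul_of_nonneg_right h2 h7
    have h9 : δ * w (s t) + c * (s t ^ 2 * ‖x'' (s t)‖) ^ 2
      = s t * (δ * (s t * ‖x' (s t)‖ ^ 2) + c * (s t ^ 3 * ‖x'' (s t)‖ ^ 2)) := by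
      simp only [hw]; ring
    rw [h9]
    linarith
  have hws : Tendsto (fun t => w (s t)) atTop (𝓝 0) := by
    have h1 : Tendsto (fun t => 2 * (E t - E (2 * t)) / δ) atTop (𝓝 0) := by
      simpa using (hDE.const_mul 2).div_const δ
    refine tendsto_of_tendsto_of_tendsto_of_le_of_le' tendsto_const_nhds h1
      (Eventually.of_forall fun t => hw0 _) ?_
    filter_upwards [eventually_ge_atTop t₀] with t ht
    rw [le_div_iff₀ hδpos]
    have := hbd t ht
    have : 0 ≤ c * (s t ^ 2 * ‖x'' (s t)‖) ^ 2 := by positivity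
    linarith
  have hxs : Tendsto (fun t => s t ^ 2 * ‖x'' (s t)‖) atTop (𝓝 0) := by
    have h1 : Tendsto (fun t => √(2 * (E t - E (2 * t)) / c)) atTop (𝓝 0) := by
      have : Tendsto (fun t => 2 * (E t - E (2 * t)) / c) atTop (𝓝 0) := by
        simpa using (hDE.const_mul 2).div_const c
      simpa using this.sqrt
    refine tendsto_of_tendsto_of_tendsto_of_le_of_le' tendsto_const_nhds h1
      (Eventually.of_forall fun t => by positivity) ?_
    filter_upwards [eventually_ge_atTop t₀] with t ht
    apply Real.le_sqrt_of_sq_le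
    rw [le_div_iff₀ hcpos]
    have := hbd t ht
    have : 0 ≤ δ * w (s t) := mul_nonneg hδpos.le (hw0 _)
    linarith
  have hw1 : Tendsto w atTop (𝓝 0) := by
    have := tendsto_nhds_unique (hwlim.comp hsT) hws
    rwa [this] at hwlim
  have htx : Tendsto (fun t => t * ‖x' t‖) atTop (𝓝 0) := by
    have h1 : Tendsto (fun t => √(w t)) atTop (𝓝 0) := by simpa using hw1.sqrt
    refine h1.congr' ?_
    filter_upwards [eventually_ge_atTop t₀] with t ht
    have htp : 0 < t := ht₀.trans_le ht
    simp only [hw]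
    rw [← mul_pow, Real.sqrt_sq (by positivity)]
  have hM : ∃ M, ∀ t, t₀ ≤ t → ‖x t - z‖ ≤ M := by
    refine ⟨√(4 / α * E t₀), fun t ht => ?_⟩
    apply Real.le_sqrt_of_sq_le
    have h1 := hlow t ht
    have h2 := hanti (mem_Ici.mpr le_rfl) (mem_Ici.mpr ht) ht
    have h3 := mul_nonneg hμpos.le (hw0 t)
    have hαp : 0 < α := by linarith
    rw [div_mul_eq_mul_div, le_div_iff₀ hαp]
    linarith
  refine ⟨hM, ?_, htx, s, fun t ht => (hs t ht).1, hxs⟩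
  obtain ⟨M, hM⟩ := hM
  have hin : Tendsto (fun t => t * ⟪x t - z, x' t⟫) atTop (𝓝 0) := by
    have h1 : Tendsto (fun t => M * (t * ‖x' t‖)) atTop (𝓝 0) := by simpa using htx.const_mul M
    refine squeeze_zero_norm' ?_ h1
    filter_upwards [eventually_ge_atTop t₀] with t ht
    have htp : 0 < t := ht₀.trans_le ht
    rw [Real.norm_eq_abs, abs_mul, abs_of_pos htp]
    calc t * |⟪x t - z, x' t⟫| ≤ t * (‖x t - z‖ * ‖x' t‖) := by
          gcongr; exact abs_real_inner_le_norm _ _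
      _ ≤ t * (M * ‖x' t‖) := by gcongr; exact hM t ht
      _ = _ := by ring
  refine ⟨_, (((hlE.sub hin).sub (hw1.const_mul (c * α))).const_mul (2 / (α - 1))).congr
    fun t => ?_⟩
  have : α - 1 ≠ 0 := by linarith
  simp only [hE, hw]
  field_simp
  ring

/-- Main convergence theorem for the continuous dynamics: for `α > 2` and
`λ(t) = (1+ε)t²/α²` with `ε > 2/(α-2)`, every solution of
`ẍ + (α/t)ẋ + A_{λ(t)}(x) = 0` converges weakly to a zero of `A`, and
`‖ẋ(t)‖ → 0`, `‖ẍ(t)‖ → 0`. -/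
theorem weak_convergence_continuous (A : H → Set H) (hA : MaximallyMonotone A)
    (hS : ∃ z : H, (0 : H) ∈ A z)
    (t₀ α ε : ℝ) (ht₀ : 0 < t₀) (hα : 2 < α) (hε : 2 / (α - 2) < ε)
    (lam : ℝ → ℝ) (hlamdef : ∀ t, lam t = (1 + ε) * t ^ 2 / α ^ 2)
    (J : ℝ → H → H) (hJ : ∀ l : ℝ, 0 < l → IsResolvent A l (J l))
    (x x' x'' : ℝ → H)
    (hx : ∀ t, t₀ ≤ t → HasDerivAt x (x' t) t)
    (hx' : ∀ t, t₀ ≤ t → HasDerivAt x' (x'' t) t)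
    (hode : ∀ t, t₀ ≤ t →
      x'' t + (α / t) • x' t + (lam t)⁻¹ • (x t - J (lam t) (x t)) = 0) :
    (∃ p : H, (0 : H) ∈ A p ∧
        ∀ y : H, Tendsto (fun t => ⟪x t, y⟫) atTop (nhds ⟪p, y⟫)) ∧
      Tendsto (fun t => ‖x' t‖) atTop (nhds 0) ∧
      Tendsto (fun t => ‖x'' t‖) atTop (nhds 0) := by
  have hα2 : 0 < α - 2 := by linarith
  have hαp : 0 < α := by linarith
  have hε' : 2 < ε * (α - 2) := by rwa [div_lt_iff₀ hα2] at hε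
  have hε0 : 0 < ε := lt_trans (by positivity) hε
  set c : ℝ := (1 + ε) / α ^ 2 with hc
  have hcpos : 0 < c := by positivity
  have hcα : c * α ^ 2 = 1 + ε := by rw [hc]; field_simp
  have hlam : ∀ t, lam t = c * t ^ 2 := fun t => by rw [hlamdef, hc]; ring
  have hlampos : ∀ t, t₀ ≤ t → 0 < lam t := fun t ht => by
    have htp : 0 < t := ht₀.trans_le ht
    rw [hlam]; positivity
  set a : ℝ → H := fun t => (lam t)⁻¹ • (x t - J (lam t) (x t)) with ha
  have haJ : ∀ t, t₀ ≤ t → a t ∈ A (J (lam t) (x t)) := fun t ht => hJ _ (hlampos t ht) _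
  have haode : ∀ t, t₀ ≤ t → x'' t + (α / t) • x' t = - a t :=
    fun t ht => eq_neg_of_add_eq_zero_left (hode t ht)
  have hJa : ∀ t, t₀ ≤ t → J (lam t) (x t) = x t - lam t • a t := fun t ht => by
    simp only [ha]
    rw [smul_smul, mul_inv_cancel₀ (hlampos t ht).ne', one_smul, sub_sub_cancel]
  have hcoc0 : ∀ z, (0 : H) ∈ A z → ∀ t, t₀ ≤ t → lam t * ‖a t‖ ^ 2 ≤ ⟪a t, x t - z⟫ := by
    intro z hz t ht
    have h := hA.1 (haJ t ht) hz
    rw [hJa t ht, sub_zero, sub_right_comm, inner_sub_right, real_inner_smul_right,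
      real_inner_self_eq_norm_sq] at h
    linarith
  have hen := fun z (hz : (0 : H) ∈ A z) =>
    aux_energy t₀ α c ε ht₀ hα hcα hε' x x' x'' z hx hx' (by
      intro t ht
      rw [haode t ht, norm_neg, inner_neg_left, neg_neg, ← hlam]
      exact hcoc0 z hz t ht)
  obtain ⟨z, hz⟩ := hS
  obtain ⟨⟨M, hM⟩, -, htx, s, hs, hsx⟩ := hen z hz
  have hxM : ∀ t, t₀ ≤ t → ‖x t‖ ≤ M + ‖z‖ := fun t ht => by
    have h1 := norm_add_le (x t - z) z
    rw [sub_add_cancel] at h1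
    linarith [hM t ht]
  -- the velocity goes to zero
  have hv : Tendsto (fun t => ‖x' t‖) atTop (nhds 0) := by
    have h1 := htx.mul tendsto_inv_atTop_zero
    rw [mul_zero] at h1
    refine h1.congr' ?_
    filter_upwards [eventually_ge_atTop t₀] with t ht
    have htp : 0 < t := ht₀.trans_le ht
    field_simp
  -- the operator term goes to zero
  have hlama : ∀ t, t₀ ≤ t → lam t * ‖a t‖ ≤ M := fun t ht => by
    have h1 := hcoc0 z hz t ht
    have h2 := real_inner_le_norm (a t) (x t - z)
    rcases (norm_nonneg (a t)).eq_or_lt with h0 | h0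
    · rw [← h0, mul_zero]; exact (norm_nonneg _).trans (hM t ht)
    · refine le_trans ?_ (hM t ht)
      have : ‖a t‖ * (lam t * ‖a t‖) ≤ ‖a t‖ * ‖x t - z‖ := by linarith
      exact le_of_mul_le_mul_left this h0
  have hlamT : Tendsto lam atTop atTop := by
    have : Tendsto (fun t : ℝ => c * t ^ 2) atTop atTop :=
      (tendsto_pow_atTop two_ne_zero).const_mul_atTop hcpos
    exact this.congr fun t => (hlam t).symm
  have ha0 : Tendsto a atTop (nhds 0) := by
    have h1 : Tendsto (fun t => M * (lam t)⁻¹) atTop (nhds 0) := by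
      simpa using (tendsto_inv_atTop_zero.comp hlamT).const_mul M
    refine squeeze_zero_norm' ?_ h1
    filter_upwards [eventually_ge_atTop t₀] with t ht
    rw [← div_eq_mul_inv, le_div_iff₀ (hlampos t ht), mul_comm]
    exact hlama t ht
  have hacc : Tendsto (fun t => ‖x'' t‖) atTop (nhds 0) := by
    have h1 : Tendsto (fun t : ℝ => α / t) atTop (nhds 0) := tendsto_const_nhds.div_atTop tendsto_id
    have h2 : Tendsto x' atTop (nhds 0) := tendsto_zero_iff_norm_tendsto_zero.mpr hv
    have h3 := ha0.neg.sub (h1.smul h2)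
    rw [smul_zero, neg_zero, sub_zero] at h3
    refine tendsto_zero_iff_norm_tendsto_zero.mp (h3.congr' ?_)
    filter_upwards [eventually_ge_atTop t₀] with t ht
    rw [← haode t ht, add_sub_cancel_right]
  refine ⟨?_, hv, hacc⟩
  have hsT : Tendsto s atTop atTop := by
    refine tendsto_atTop_mono' _ ?_ tendsto_id
    filter_upwards [eventually_ge_atTop t₀] with t ht using (hs t ht).1
  have htx2 : Tendsto (fun t => t * ‖x' t‖) atTop (nhds 0) := htx
  -- the residual at the good times goes to zero
  have hres : Tendsto (fun t => lam (s t) • a (s t)) atTop (nhds 0) := by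
    have h1 : Tendsto (fun t => c * (s t ^ 2 * ‖x'' (s t)‖) + c * α * (s t * ‖x' (s t)‖))
        atTop (nhds 0) := by
      simpa using (hsx.const_mul c).add ((htx.comp hsT).const_mul (c * α))
    refine squeeze_zero_norm' ?_ h1
    filter_upwards [eventually_ge_atTop t₀] with t ht
    have hst : t₀ ≤ s t := ht.trans (hs t ht).1
    have hsp : 0 < s t := ht₀.trans_le hst
    have h2 : ‖a (s t)‖ ≤ ‖x'' (s t)‖ + α / s t * ‖x' (s t)‖ := by
      rw [← norm_neg, ← haode _ hst]
      refine (norm_add_le _ _).trans ?_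
      rw [norm_smul, Real.norm_eq_abs, abs_of_pos (by positivity)]
    rw [norm_smul, Real.norm_eq_abs, abs_of_pos (hlampos _ hst), hlam]
    calc c * s t ^ 2 * ‖a (s t)‖ ≤ c * s t ^ 2 * (‖x'' (s t)‖ + α / s t * ‖x' (s t)‖) := by gcongr
      _ = _ := by field_simp
  -- the trajectory moves little between `t` and `s t`
  have hmove : Tendsto (fun t => x (s t) - x t) atTop (nhds 0) := by
    rw [Metric.tendsto_atTop]
    intro η hη
    obtain ⟨T, hT⟩ := (Metric.tendsto_atTop.mp htx) (η / 2) (by positivity)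
    refine ⟨max T t₀, fun t ht => ?_⟩
    have ht1 : T ≤ t := (le_max_left _ _).trans ht
    have ht2 : t₀ ≤ t := (le_max_right _ _).trans ht
    have htp : 0 < t := ht₀.trans_le ht2
    obtain ⟨h1, h2⟩ := hs t ht2
    have hb : ∀ r ∈ Icc t (s t), ‖x' r‖ ≤ η / 2 / t := by
      intro r hr
      have hrp : 0 < r := htp.trans_le hr.1
      have h3 := hT r (ht1.trans hr.1)
      rw [Real.dist_eq, sub_zero, abs_of_nonneg (by positivity)] at h3
      rw [le_div_iff₀ htp]
      have := mul_le_mul_of_nonneg_right hr.1 (norm_nonneg (x' r))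
      linarith
    have h4 := (convex_Icc t (s t)).norm_image_sub_le_of_norm_hasDerivWithin_le
      (fun r hr => (hx r (ht2.trans hr.1)).hasDerivWithinAt) hb
      (left_mem_Icc.mpr h1) (right_mem_Icc.mpr h1)
    rw [dist_zero_right]
    have h5 : ‖s t - t‖ ≤ t := by
      rw [Real.norm_eq_abs, abs_of_nonneg (by linarith)]; linarith
    calc _ ≤ _ := h4
      _ ≤ η / 2 / t * t := by gcongr
      _ = η / 2 := by field_simp
      _ < η := by linarith
  refine aux_opial x {p | (0 : H) ∈ A p} ⟨z, hz⟩ (fun p hp => (hen p hp).2.1) (M + ‖z‖) ?_ ?_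
  · filter_upwards [eventually_ge_atTop t₀] with t ht using hxM t ht
  intro U hU p hp
  refine hA.2 p 0 fun y v hv => ?_
  set b : ℝ → H := fun t => J (lam (s t)) (x (s t)) with hb
  have hbx : Tendsto (fun t => b t - x t) atTop (nhds 0) := by
    have h1 := hmove.sub hres
    rw [sub_zero] at h1
    refine h1.congr' ?_
    filter_upwards [eventually_ge_atTop t₀] with t ht
    simp only [hb]
    rw [hJa _ (ht.trans (hs t ht).1)]
    abel
  have hab : Tendsto (fun t => ⟪a (s t), b t - y⟫) atTop (nhds 0) := by
    have h1 : Tendsto (fun t => ‖a (s t)‖ * (‖b t - x t‖ + (M + ‖z‖ + ‖y‖))) atTop (nhds 0) := by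
      simpa using ((ha0.comp hsT).norm).mul (hbx.norm.add_const (M + ‖z‖ + ‖y‖))
    refine squeeze_zero_norm' ?_ h1
    filter_upwards [eventually_ge_atTop t₀] with t ht
    refine (norm_inner_le_norm _ _).trans ?_
    gcongr
    have h2 : b t - y = (b t - x t) + (x t - y) := by abel
    rw [h2]
    refine (norm_add_le _ _).trans ?_
    have := norm_sub_le (x t) y
    linarith [hxM t ht]
  have hvb : Tendsto (fun t => ⟪v, b t - y⟫) U (nhds ⟪v, p - y⟫) := by
    have h1 : Tendsto (fun t => ⟪v, b t - x t⟫) U (nhds 0) := by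
      have : Tendsto (fun t => ⟪v, b t - x t⟫) U (nhds ⟪v, (0 : H)⟫) :=
        tendsto_const_nhds.inner (hbx.mono_left hU)
      simpa using this
    have h2 := (h1.add (hp v)).sub_const ⟪v, y⟫
    rw [zero_add, real_inner_comm v p, ← inner_sub_right] at h2
    refine h2.congr fun t => ?_
    rw [real_inner_comm v (x t), ← inner_add_right, ← inner_sub_right, sub_add_cancel]
  have hfin := (hab.mono_left hU).sub hvb
  rw [zero_sub] at hfin
  rw [zero_sub, inner_neg_left]
  refine ge_of_tendsto hfin (hU ?_)
  filter_upwards [eventually_ge_atTop t₀] with t ht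
  have := hA.1 (haJ (s t) (ht.trans (hs t ht).1)) hv
  rw [inner_sub_left] at this
  exact this
end

section
/- Let α > 2, s > 0, λ_k = (1+ε)(s/α²)k² with ε > 2/(α−2), and let A be maximally monotone on a real Hilbert space H with A^{-1}(0) ≠ ∅. Then any sequence generated by the Regularized Inertial Proximal Algorithm y_k = x_k + (1 − α/k)(x_k − x_{k-1}), x_{k+1} = (λ_k/(λ_k+s)) y_k + (s/(λ_k+s)) (I + (λ_k+s)A)^{-1}(y_k) satisfies: ‖x_{k+1} − x_k‖ = O(1/k), ∑_k k‖x_k − x_{k-1}‖² < ∞, and (x_k) and (y_k) converge weakly to a common point of A^{-1}(0). -/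
open scoped RealInnerProductSpace

variable {H : Type*} [NormedAddCommGroup H] [InnerProductSpace ℝ H] [CompleteSpace H]

open Filter
set_option linter.unusedSectionVars false
set_option maxHeartbeats 4000000

/-- one-step decrease of the Lyapunov function -/
lemma ripa_step (a d d' w : H) (α e1 ε k : ℝ) (hk : α ≤ k) (hα : 2 < α) (he1 : 0 < e1)
    (hw : w = (1 - α / k) • d - d')
    (hm : (1 + ε) / α ^ 2 * k ^ 2 * ‖w‖ ^ 2 ≤ ⟪w, a + d'⟫) :
    k * (‖a + d'‖ ^ 2 / 2 - ‖a‖ ^ 2 / 2) + (α - 1) * (‖a‖ ^ 2 / 2)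
      + (1 + e1) / α * k ^ 2 * ‖d'‖ ^ 2 + (e1 - 2 * ((1 + e1) / α)) * (k * ‖d‖ ^ 2)
      + (ε - e1) / α ^ 2 * (k ^ 3 * ‖w‖ ^ 2)
    ≤ (k - 1) * (‖a‖ ^ 2 / 2 - ‖a - d‖ ^ 2 / 2) + (α - 1) * (‖a - d‖ ^ 2 / 2)
      + (1 + e1) / α * (k - 1) ^ 2 * ‖d‖ ^ 2 := by
  have hα0 : 0 < α := by linarith
  have hk0 : 0 < k := by linarith
  have hD : 0 ≤ ‖d‖ ^ 2 := by positivity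
  have hW0 : 0 ≤ ‖w‖ ^ 2 := by positivity
  have hDel : 0 ≤ ‖d - d'‖ ^ 2 := by positivity
  have hW : ‖w‖ ^ 2 = (1 - α / k) ^ 2 * ‖d‖ ^ 2 - 2 * (1 - α / k) * ⟪d, d'⟫ + ‖d'‖ ^ 2 := by
    rw [hw, norm_sub_sq_real, norm_smul, real_inner_smul_left, mul_pow, Real.norm_eq_abs, sq_abs]
    ring
  have hI : ⟪w, a + d'⟫ = (1 - α / k) * ⟪a, d⟫ - ⟪a, d'⟫ + (1 - α / k) * ⟪d, d'⟫ - ‖d'‖ ^ 2 := by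
    rw [hw, inner_sub_left, inner_add_right, inner_add_right, real_inner_smul_left,
      real_inner_smul_left, real_inner_self_eq_norm_sq, real_inner_comm a d, real_inner_comm a d']
    ring
  have h1 : ‖a + d'‖ ^ 2 = ‖a‖ ^ 2 + 2 * ⟪a, d'⟫ + ‖d'‖ ^ 2 := norm_add_sq_real a d'
  have h2 : ‖a - d‖ ^ 2 = ‖a‖ ^ 2 - 2 * ⟪a, d⟫ + ‖d‖ ^ 2 := norm_sub_sq_real a d
  have h3 : ‖d - d'‖ ^ 2 = ‖d‖ ^ 2 - 2 * ⟪d, d'⟫ + ‖d'‖ ^ 2 := norm_sub_sq_real d d'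
  have hβ0 : 0 ≤ 1 - α / k := by
    have : α / k ≤ 1 := by rw [div_le_one hk0]; exact hk
    linarith
  have hβ1 : 1 - α / k ≤ 1 := by
    have : 0 ≤ α / k := by positivity
    linarith
  have p1 : 0 ≤ k * (⟪w, a + d'⟫ - (1 + ε) / α ^ 2 * k ^ 2 * ‖w‖ ^ 2) :=
    mul_nonneg hk0.le (by linarith)
  have p2 : 0 ≤ 1 / 2 * k * ‖w‖ ^ 2 := by positivity
  have p3 : 0 ≤ (1 + e1) / α ^ 2 * k ^ 3 * ((1 - α / k) * ‖d - d'‖ ^ 2) := by positivity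
  have p4 : 0 ≤ k * ((1 - (1 - α / k) ^ 2 / 2 - (1 - α / k) / 2) * ‖d‖ ^ 2) := by
    refine mul_nonneg hk0.le (mul_nonneg ?_ hD)
    nlinarith
  have p5 : 0 ≤ (1 + e1) / α * ‖d‖ ^ 2 := by positivity
  have key : (k - 1) * (‖a‖ ^ 2 / 2 - ‖a - d‖ ^ 2 / 2) + (α - 1) * (‖a - d‖ ^ 2 / 2)
      + (1 + e1) / α * (k - 1) ^ 2 * ‖d‖ ^ 2 -
      (k * (‖a + d'‖ ^ 2 / 2 - ‖a‖ ^ 2 / 2) + (α - 1) * (‖a‖ ^ 2 / 2)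
      + (1 + e1) / α * k ^ 2 * ‖d'‖ ^ 2 + (e1 - 2 * ((1 + e1) / α)) * (k * ‖d‖ ^ 2)
      + (ε - e1) / α ^ 2 * (k ^ 3 * ‖w‖ ^ 2)) =
      k * (⟪w, a + d'⟫ - (1 + ε) / α ^ 2 * k ^ 2 * ‖w‖ ^ 2) + 1 / 2 * k * ‖w‖ ^ 2
      + (1 + e1) / α ^ 2 * k ^ 3 * ((1 - α / k) * ‖d - d'‖ ^ 2)
      + k * ((1 - (1 - α / k) ^ 2 / 2 - (1 - α / k) / 2) * ‖d‖ ^ 2)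
      + (1 + e1) / α * ‖d‖ ^ 2 := by
    rw [hW, hI, h1, h2, h3]
    field_simp
    ring
  linarith

lemma ripa_lower (a d : H) (α e1 k : ℝ) (hk : 1 ≤ k) (hα : 2 < α) (he1 : 0 < e1) :
    (α - 2) / 2 * (‖a - d‖ ^ 2 / 2) ≤
    (k - 1) * (‖a‖ ^ 2 / 2 - ‖a - d‖ ^ 2 / 2) + (α - 1) * (‖a - d‖ ^ 2 / 2)
      + (1 + e1) / α * (k - 1) ^ 2 * ‖d‖ ^ 2 := by
  have hα0 : 0 < α := by linarith
  have h1 : ‖a‖ ^ 2 = ‖a - d‖ ^ 2 + 2 * ⟪a - d, d⟫ + ‖d‖ ^ 2 := by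
    have := norm_add_sq_real (a - d) d
    rwa [sub_add_cancel] at this
  have h2 : -(‖a - d‖ * ‖d‖) ≤ ⟪a - d, d⟫ := by
    have := abs_real_inner_le_norm (a - d) d
    exact (abs_le.mp this).1
  have h3 : 0 ≤ (k - 1) * (⟪a - d, d⟫ + ‖a - d‖ * ‖d‖) := mul_nonneg (by linarith) (by linarith)
  have h4 : 0 ≤ (k - 1) * ‖d‖ ^ 2 := mul_nonneg (by linarith) (by positivity)
  have h5 : 0 ≤ 1 / α * ((k - 1) * ‖d‖ - α / 2 * ‖a - d‖) ^ 2 := by positivity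
  have h6 : 0 ≤ e1 / α * (k - 1) ^ 2 * ‖d‖ ^ 2 := by positivity
  have key : (k - 1) * (‖a‖ ^ 2 / 2 - ‖a - d‖ ^ 2 / 2) + (α - 1) * (‖a - d‖ ^ 2 / 2)
      + (1 + e1) / α * (k - 1) ^ 2 * ‖d‖ ^ 2 - (α - 2) / 2 * (‖a - d‖ ^ 2 / 2)
      = (k - 1) * (⟪a - d, d⟫ + ‖a - d‖ * ‖d‖) + 1 / 2 * ((k - 1) * ‖d‖ ^ 2)
      + 1 / α * ((k - 1) * ‖d‖ - α / 2 * ‖a - d‖) ^ 2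
      + e1 / α * (k - 1) ^ 2 * ‖d‖ ^ 2 := by
    rw [h1]
    field_simp
    ring
  linarith

/-- quasi-decreasing sequence converges, and tends to zero if `a k / k` is summable -/
lemma ripa_conv (a b : ℕ → ℝ) (K : ℕ) (ha : ∀ k, 0 ≤ a k) (hb : Summable b)
    (hab : ∀ k, K ≤ k → a (k + 1) ≤ a k + b k)
    (hs : Summable (fun k : ℕ => a k / (k : ℝ))) : Tendsto a atTop (nhds 0) := by
  -- u k = a (k+K) - sum_{i<k} b (i+K) antitone, bounded below
  have hbK : Summable (fun i => b (i + K)) := (summable_nat_add_iff K).2 hb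
  have hS := hbK.hasSum.tendsto_sum_nat
  obtain ⟨M, hM⟩ := hS.bddAbove_range
  have hanti : Antitone (fun k => a (k + K) - ∑ i ∈ Finset.range k, b (i + K)) := by
    refine antitone_nat_of_succ_le fun k => ?_
    rw [Finset.sum_range_succ]
    have := hab (k + K) (by omega)
    have e : k + 1 + K = k + K + 1 := by omega
    rw [e]; linarith
  have hbdd : BddBelow (Set.range (fun k => a (k + K) - ∑ i ∈ Finset.range k, b (i + K))) := by
    refine ⟨-M, ?_⟩
    rintro _ ⟨k, rfl⟩
    have h1 := hM ⟨k, rfl⟩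
    have h2 := ha (k + K)
    simp only at h1 ⊢
    linarith
  have h1 := (tendsto_atTop_ciInf hanti hbdd).add hS
  simp only [sub_add_cancel] at h1
  have h2 : ∃ L, Tendsto a atTop (nhds L) := ⟨_, (tendsto_add_atTop_iff_nat K).1 h1⟩
  obtain ⟨L, hL⟩ := h2
  have hL0 : 0 ≤ L := ge_of_tendsto' hL ha
  rcases hL0.eq_or_lt with h | h
  · rw [h]; exact hL
  exfalso
  have hev : ∀ᶠ k in atTop, L / 2 < a k := hL.eventually (lt_mem_nhds (by linarith))
  have : Summable (fun k : ℕ => (1 : ℝ) / k) := by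
    have h3 : Summable (fun k : ℕ => (2 / L) * (a k / (k : ℝ))) := hs.mul_left _
    refine Summable.of_norm_bounded_eventually_nat h3 ?_
    filter_upwards [hev, eventually_ge_atTop 1] with k hk hk1
    have hk0 : (0 : ℝ) < k := by exact_mod_cast hk1
    rw [Real.norm_of_nonneg (by positivity), ← mul_div_assoc]
    refine div_le_div_of_nonneg_right ?_ hk0.le
    rw [div_mul_eq_mul_div, le_div_iff₀ h]; linarith
  exact Real.not_summable_one_div_natCast this

/-- summability from a Lyapunov decrease -/
lemma ripa_summable (E f : ℕ → ℝ) (K : ℕ) (hE : ∀ k, K ≤ k → 0 ≤ E k) (hf : ∀ k, 0 ≤ f k)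
    (h : ∀ k, K ≤ k → E (k + 1) + f k ≤ E k) :
    Summable f ∧ ∃ L, Tendsto E atTop (nhds L) := by
  constructor
  · rw [← summable_nat_add_iff K]
    refine summable_of_sum_range_le (c := E K) (fun n => hf _) fun n => ?_
    have : ∀ n, ∑ i ∈ Finset.range n, f (i + K) + E (n + K) ≤ E K := by
      intro n
      induction n with
      | zero => simp
      | succ n ih =>
        rw [Finset.sum_range_succ]
        have := h (n + K) (by omega)
        have e : n + 1 + K = n + K + 1 := by omega
        rw [e]; linarith
    have h1 := this n
    have h2 := hE (n + K) (by omega)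
    linarith
  · have hanti : Antitone (fun k => E (k + K)) := by
      refine antitone_nat_of_succ_le fun k => ?_
      have := h (k + K) (by omega)
      have e : k + 1 + K = k + K + 1 := by omega
      rw [e]; linarith [hf (k + K)]
    have hbdd : BddBelow (Set.range (fun k => E (k + K))) := by
      refine ⟨0, ?_⟩
      rintro _ ⟨k, rfl⟩
      exact hE _ (by omega)
    exact ⟨_, (tendsto_add_atTop_iff_nat K).1 (tendsto_atTop_ciInf hanti hbdd)⟩

/-- variation of the residuals -/
lemma ripa_var (w w' e : H) (m m' k : ℝ) (hk : 0 < k) (hm : 0 < m) (hmm : m ≤ m')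
    (hr : 1 - m / m' ≤ 2 / k)
    (hmono : 0 ≤ ⟪w' - w, e - (m' • w' - m • w)⟫) :
    ‖m' • w'‖ ^ 2 ≤ ‖m • w‖ ^ 2 + (10 * (‖m' • w'‖ ^ 2 / k) + 2 * (k * ‖e‖ ^ 2)) := by
  have hm' : 0 < m' := by linarith
  obtain ⟨v, hv⟩ : ∃ v, v = m • w := ⟨_, rfl⟩
  obtain ⟨v', hv'⟩ : ∃ v', v' = m' • w' := ⟨_, rfl⟩
  obtain ⟨t, ht⟩ : ∃ t, t = 1 - m / m' := ⟨_, rfl⟩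
  have ht0 : 0 ≤ t := by
    have : m / m' ≤ 1 := by rw [div_le_one hm']; exact hmm
    rw [ht]; linarith
  have e1 : m • (w' - w) = (v' - v) - t • v' := by
    rw [hv, hv', ht, smul_sub, sub_smul, one_smul, smul_smul, div_mul_cancel₀ _ hm'.ne']
    abel
  have h1 : 0 ≤ ⟪(v' - v) - t • v', e - (v' - v)⟫ := by
    rw [← e1, real_inner_smul_left, hv, hv']
    exact mul_nonneg hm.le hmono
  rw [← hv, ← hv']
  obtain ⟨q, hq⟩ : ∃ q, q = v' - v := ⟨_, rfl⟩
  rw [← hq, inner_sub_left, inner_sub_right, inner_sub_right, real_inner_smul_left,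
    real_inner_smul_left, real_inner_self_eq_norm_sq] at h1
  have c1 := (abs_le.mp (abs_real_inner_le_norm q e)).2
  have c2 := (abs_le.mp (abs_real_inner_le_norm v' e)).1
  have c3 := (abs_le.mp (abs_real_inner_le_norm v' q)).2
  have c2' := mul_le_mul_of_nonneg_left c2 ht0
  have c3' := mul_le_mul_of_nonneg_left c3 ht0
  have hqn : ‖q‖ ≤ 2 * (t * ‖v'‖ + ‖e‖) := by
    by_contra hcon
    push Not at hcon
    have n1 := norm_nonneg q
    have n2 : 0 ≤ t * ‖v'‖ := by positivity
    have n3 := norm_nonneg e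
    nlinarith [mul_nonneg n2 n3]
  have h2 : ‖v‖ ^ 2 = ‖v'‖ ^ 2 - 2 * ⟪v', q⟫ + ‖q‖ ^ 2 := by
    rw [← norm_sub_sq_real, hq, sub_sub_cancel]
  have n4 := norm_nonneg v'
  have h3 : ‖v'‖ * ‖q‖ ≤ ‖v'‖ * (2 * (t * ‖v'‖ + ‖e‖)) := mul_le_mul_of_nonneg_left hqn n4
  have h4 : t * ‖v'‖ ^ 2 ≤ 2 / k * ‖v'‖ ^ 2 :=
    mul_le_mul_of_nonneg_right (ht ▸ hr) (by positivity)
  have h5 : 4 * (‖v'‖ * ‖e‖) ≤ 2 / k * ‖v'‖ ^ 2 + 2 * (k * ‖e‖ ^ 2) := by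
    have : 0 ≤ 2 / k * (‖v'‖ - k * ‖e‖) ^ 2 := by positivity
    have e2 : 2 / k * (‖v'‖ - k * ‖e‖) ^ 2
      = 2 / k * ‖v'‖ ^ 2 + 2 * (k * ‖e‖ ^ 2) - 4 * (‖v'‖ * ‖e‖) := by field_simp; ring
    linarith
  have e3 : 10 * (‖v'‖ ^ 2 / k) = 4 * (2 / k * ‖v'‖ ^ 2) + 2 / k * ‖v'‖ ^ 2 := by ring
  nlinarith [sq_nonneg ‖q‖]

/-- bounded sequences have weak limits along ultrafilters -/
lemma ripa_weak (x : ℕ → H) (M : ℝ) (U : Ultrafilter ℕ) (hU : (U : Filter ℕ) ≤ atTop)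
    (hx : ∀ᶠ k in atTop, ‖x k‖ ≤ M) :
    ∃ p : H, ∀ v : H, Tendsto (fun k => ⟪x k, v⟫) U (nhds ⟪p, v⟫) := by
  have hc : IsCompact (WeakDual.toStrongDual ⁻¹' Metric.closedBall (0 : StrongDual ℝ H) M) :=
    WeakDual.isCompact_closedBall 0 M
  let F : ℕ → WeakDual ℝ H := fun k => StrongDual.toWeakDual (InnerProductSpace.toDual ℝ H (x k))
  have hmem : ((U.map F : Ultrafilter _) : Filter _) ≤ Filter.principal
      (WeakDual.toStrongDual ⁻¹' Metric.closedBall (0 : StrongDual ℝ H) M) := by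
    rw [Filter.le_principal_iff]
    change ∀ᶠ k in (U : Filter ℕ), _
    filter_upwards [hU hx] with k hk
    simpa [F] using hk
  obtain ⟨φ, -, hφ⟩ := hc.ultrafilter_le_nhds _ hmem
  refine ⟨(InnerProductSpace.toDual ℝ H).symm (WeakDual.toStrongDual φ), fun v => ?_⟩
  have h1 : Tendsto F U (nhds φ) := hφ
  have h2 := ((WeakDual.eval_continuous v).tendsto φ).comp h1
  rw [InnerProductSpace.toDual_symm_apply]
  exact h2

lemma ripa_opial (S : Set H) (x : ℕ → H) (M : ℝ) (hx : ∀ᶠ k in atTop, ‖x k‖ ≤ M)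
    (h1 : ∀ z ∈ S, ∃ L, Tendsto (fun k => ‖x k - z‖ ^ 2) atTop (nhds L))
    (h2 : ∀ (U : Ultrafilter ℕ) (p : H), (U : Filter ℕ) ≤ atTop →
      (∀ v : H, Tendsto (fun k => ⟪x k, v⟫) U (nhds ⟪p, v⟫)) → p ∈ S) :
    ∃ p ∈ S, ∀ v : H, Tendsto (fun k => ⟪x k, v⟫) atTop (nhds ⟪p, v⟫) := by
  have hV : ((hyperfilter ℕ : Ultrafilter ℕ) : Filter ℕ) ≤ atTop := Nat.hyperfilter_le_atTop
  obtain ⟨p, hp⟩ := ripa_weak x M (hyperfilter ℕ) hV hx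
  have hpS := h2 _ p hV hp
  refine ⟨p, hpS, fun v => ?_⟩
  rw [tendsto_iff_ultrafilter]
  intro U hU
  obtain ⟨q, hq⟩ := ripa_weak x M U hU hx
  have hqS := h2 _ q hU hq
  obtain ⟨L1, hL1⟩ := h1 p hpS
  obtain ⟨L2, hL2⟩ := h1 q hqS
  have h3 : Tendsto (fun k => ⟪x k, p - q⟫) atTop
      (nhds ((L2 - L1 + ‖p‖ ^ 2 - ‖q‖ ^ 2) / 2)) := by
    have h4 := ((((hL2.sub hL1).add_const (‖p‖ ^ 2)).sub_const (‖q‖ ^ 2)).div_const 2)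
    refine h4.congr fun k => ?_
    rw [norm_sub_sq_real, norm_sub_sq_real, inner_sub_right]
    ring
  have e1 := tendsto_nhds_unique (h3.mono_left hV) (hp (p - q))
  have e2 := tendsto_nhds_unique (h3.mono_left hU) (hq (p - q))
  have e3 : ⟪p - q, p - q⟫ = 0 := by
    rw [inner_sub_left, ← e1, ← e2, sub_self]
  have e4 : p = q := sub_eq_zero.mp (inner_self_eq_zero.mp e3)
  rw [e4]
  exact hq v

/-- Convergence of the Regularized Inertial Proximal Algorithm (RIPA): with
`α > 2`, `λ_k = (1+ε)(s/α²)k²`, `ε > 2/(α-2)`, the iterates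
`y_k = x_k + (1 - α/k)(x_k - x_{k-1})`,
`x_{k+1} = (λ_k/(λ_k+s)) y_k + (s/(λ_k+s)) (I + (λ_k+s)A)⁻¹(y_k)` satisfy
`‖x_{k+1}-x_k‖ = O(1/k)`, `∑ k‖x_k - x_{k-1}‖² < ∞`, and `(x_k)`, `(y_k)`
converge weakly to a common zero of `A`. -/
theorem RIPA_convergence (A : H → Set H) (hA : MaximallyMonotone A)
    (hS : ∃ z : H, (0 : H) ∈ A z)
    (s α ε : ℝ) (hs : 0 < s) (hα : 2 < α) (hε : 2 / (α - 2) < ε)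
    (lam : ℕ → ℝ) (hlam : ∀ k : ℕ, lam k = (1 + ε) * (s / α ^ 2) * (k : ℝ) ^ 2)
    (J : ℝ → H → H) (hJ : ∀ l : ℝ, 0 < l → IsResolvent A l (J l))
    (x y : ℕ → H)
    (hy : ∀ k, 1 ≤ k → y k = x k + (1 - α / (k : ℝ)) • (x k - x (k - 1)))
    (hx : ∀ k, 1 ≤ k → x (k + 1) =
      (lam k / (lam k + s)) • y k + (s / (lam k + s)) • J (lam k + s) (y k)) :
    (∃ C : ℝ, ∀ k, 1 ≤ k → ‖x (k + 1) - x k‖ ≤ C / (k : ℝ)) ∧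
      Summable (fun k : ℕ => (k : ℝ) * ‖x k - x (k - 1)‖ ^ 2) ∧
      ∃ p : H, (0 : H) ∈ A p ∧
        (∀ v : H, Tendsto (fun k => ⟪x k, v⟫) atTop (nhds ⟪p, v⟫)) ∧
        (∀ v : H, Tendsto (fun k => ⟪y k, v⟫) atTop (nhds ⟪p, v⟫)) := by
  obtain ⟨hmon, hmax⟩ := hA
  have hα0 : 0 < α := by linarith
  have hα2 : 0 < α - 2 := by linarith
  have hεq : 0 < 2 / (α - 2) := by positivity
  obtain ⟨e1, he1a, he1b⟩ := exists_between hε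
  have he1 : 0 < e1 := by linarith
  have hε0 : 0 < ε := by linarith
  obtain ⟨κ, hκ⟩ : ∃ κ, κ = (1 + ε) / α ^ 2 := ⟨_, rfl⟩
  have hκ0 : 0 < κ := by rw [hκ]; positivity
  obtain ⟨d, hd⟩ : ∃ d : ℕ → H, ∀ k, d k = x k - x (k - 1) := ⟨_, fun _ => rfl⟩
  have hd1 : ∀ k, d (k + 1) = x (k + 1) - x k := fun k => by rw [hd]; simp
  obtain ⟨w, hwdef⟩ : ∃ w : ℕ → H, ∀ k, w k = y k - x (k + 1) := ⟨_, fun _ => rfl⟩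
  obtain ⟨m, hm⟩ : ∃ m : ℕ → ℝ, ∀ k, m k = κ * (k : ℝ) ^ 2 + 1 := ⟨_, fun _ => rfl⟩
  have hm0 : ∀ k, 0 < m k := fun k => by rw [hm]; positivity
  have hw : ∀ k, 1 ≤ k → w k = (1 - α / (k : ℝ)) • d k - d (k + 1) := by
    intro k hk
    rw [hwdef, hy k hk, hd1, hd]; abel
  have hmu : ∀ k, lam k + s = s * m k := by
    intro k; rw [hlam, hm, hκ]; field_simp
  have hlam' : ∀ k, lam k = s * m k - s := fun k => by rw [← hmu]; ring
  have hJw : ∀ k, 1 ≤ k → m k • w k = y k - J (lam k + s) (y k) := by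
    intro k hk
    have hmk := (hm0 k).ne'
    rw [hwdef, hx k hk, hmu k, hlam' k]
    have c1 : m k * ((s * m k - s) / (s * m k)) = m k - 1 := by field_simp
    have c2 : m k * (s / (s * m k)) = 1 := by field_simp
    rw [smul_sub, smul_add, smul_smul, smul_smul, c1, c2, sub_smul, one_smul, one_smul]
    abel
  have hP : ∀ k, 1 ≤ k → s⁻¹ • w k ∈ A (y k - m k • w k) := by
    intro k hk
    have h1 := hJ (lam k + s) (by rw [hmu]; exact mul_pos hs (hm0 k)) (y k)
    have hmk := (hm0 k).ne'
    rw [← hJw k hk, smul_smul, hmu k] at h1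
    have c : (s * m k)⁻¹ * m k = s⁻¹ := by field_simp
    rw [c, ← hmu k] at h1
    have e : y k - m k • w k = J (lam k + s) (y k) := by rw [hJw k hk]; abel
    rw [e]; exact h1
  have hzero : ∀ z, (0 : H) ∈ A z → ∀ k : ℕ, 1 ≤ k →
      (1 + ε) / α ^ 2 * (k : ℝ) ^ 2 * ‖w k‖ ^ 2 ≤ ⟪w k, (x k - z) + d (k + 1)⟫ := by
    intro z hz k hk
    have h1 := hmon (hP k hk) hz
    rw [sub_zero, real_inner_smul_left] at h1
    have h2 : 0 ≤ ⟪w k, y k - m k • w k - z⟫ := by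
      by_contra hc
      push Not at hc
      have : 0 < s⁻¹ := by positivity
      nlinarith
    have e : y k - m k • w k - z = (x k - z) + d (k + 1) - (κ * (k : ℝ) ^ 2) • w k := by
      rw [hm, hd1, add_smul, one_smul]
      have : y k = x (k + 1) + w k := by rw [hwdef]; abel
      rw [this]; abel
    rw [e, inner_sub_right, real_inner_smul_right, real_inner_self_eq_norm_sq] at h2
    rw [← hκ]; linarith
  obtain ⟨K, hKα⟩ := exists_nat_ge α
  have hKle : ∀ k, K ≤ k → α ≤ (k : ℝ) := fun k hk => hKα.trans (by exact_mod_cast hk)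
  have hK1 : ∀ k, K ≤ k → 1 ≤ k := by
    intro k hk
    have := hKle k hk
    have h2 : (1 : ℝ) ≤ k := by linarith
    exact_mod_cast h2
  obtain ⟨δ, hδ⟩ : ∃ δ, δ = e1 - 2 * ((1 + e1) / α) := ⟨_, rfl⟩
  have hδ0 : 0 < δ := by
    have h1 : 2 < e1 * (α - 2) := by rwa [div_lt_iff₀ hα2] at he1a
    have h2 : δ = (e1 * (α - 2) - 2) / α := by rw [hδ]; field_simp; ring
    rw [h2]; exact div_pos (by linarith) hα0
  obtain ⟨δ', hδ'⟩ : ∃ δ', δ' = (ε - e1) / α ^ 2 := ⟨_, rfl⟩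
  have hdp : 0 < δ' := by rw [hδ']; exact div_pos (by linarith) (by positivity)
  obtain ⟨η, hη⟩ : ∃ η, η = (1 + e1) / α := ⟨_, rfl⟩
  have hη0 : 0 < η := by rw [hη]; positivity
  obtain ⟨E, hE⟩ : ∃ E : H → ℕ → ℝ, ∀ z k, E z k = ((k : ℝ) - 1) *
      (‖x k - z‖ ^ 2 / 2 - ‖x (k - 1) - z‖ ^ 2 / 2) + (α - 1) * (‖x (k - 1) - z‖ ^ 2 / 2)
      + η * ((k : ℝ) - 1) ^ 2 * ‖d k‖ ^ 2 := ⟨_, fun _ _ => rfl⟩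
  have hsub : ∀ z k, x (k - 1) - z = (x k - z) - d k := fun z k => by rw [hd]; abel
  have hadd : ∀ z k, x (k + 1) - z = (x k - z) + d (k + 1) := fun z k => by rw [hd1]; abel
  have hElow : ∀ z k, 1 ≤ k → (α - 2) / 2 * (‖x (k - 1) - z‖ ^ 2 / 2) ≤ E z k := by
    intro z k hk
    rw [hE, hsub, hη]
    exact ripa_lower _ _ α e1 k (by exact_mod_cast hk) hα he1
  have hEstep : ∀ z, (0 : H) ∈ A z → ∀ k, K ≤ k →
      E z (k + 1) + (δ * ((k : ℝ) * ‖d k‖ ^ 2) + δ' * ((k : ℝ) ^ 3 * ‖w k‖ ^ 2)) ≤ E z k := by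
    intro z hz k hk
    have h1 := ripa_step (x k - z) (d k) (d (k + 1)) (w k) α e1 ε k (hKle k hk) hα he1
      (hw k (hK1 k hk)) (hzero z hz k (hK1 k hk))
    rw [← hη, ← hδ', ← hadd, ← hsub] at h1
    rw [hE, hE, hδ, ← hη]
    simp only [Nat.add_sub_cancel, Nat.cast_add, Nat.cast_one, add_sub_cancel_right]
    linarith
  have hLyap : ∀ z, (0 : H) ∈ A z →
      Summable (fun k : ℕ => δ * ((k : ℝ) * ‖d k‖ ^ 2) + δ' * ((k : ℝ) ^ 3 * ‖w k‖ ^ 2)) ∧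
      ∃ L, Tendsto (E z) atTop (nhds L) := by
    intro z hz
    refine ripa_summable (E z) _ K (fun k hk => ?_) (fun k => by positivity) (hEstep z hz)
    exact le_trans (by positivity) (hElow z k (hK1 k hk))
  obtain ⟨z0, hz0⟩ := hS
  have hsum := (hLyap z0 hz0).1
  have hsd : Summable (fun k : ℕ => (k : ℝ) * ‖d k‖ ^ 2) := by
    refine Summable.of_nonneg_of_le (fun k => by positivity) (fun k => ?_) (hsum.mul_left δ⁻¹)
    rw [mul_add, inv_mul_cancel_left₀ hδ0.ne']
    have : 0 ≤ δ⁻¹ * (δ' * ((k : ℝ) ^ 3 * ‖w k‖ ^ 2)) := by positivity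
    linarith
  have hsw : Summable (fun k : ℕ => (k : ℝ) ^ 3 * ‖w k‖ ^ 2) := by
    refine Summable.of_nonneg_of_le (fun k => by positivity) (fun k => ?_) (hsum.mul_left δ'⁻¹)
    rw [mul_add, inv_mul_cancel_left₀ hdp.ne']
    have : 0 ≤ δ'⁻¹ * (δ * ((k : ℝ) * ‖d k‖ ^ 2)) := by positivity
    linarith
  -- boundedness
  have hbound : ∀ z, (0 : H) ∈ A z → ∃ M, ∀ k, ‖x k - z‖ ≤ M := by
    intro z hz
    obtain ⟨L, hL⟩ := (hLyap z hz).2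
    obtain ⟨B, hB⟩ := hL.bddAbove_range
    refine ⟨4 / (α - 2) * B + 1, fun k => ?_⟩
    have h1 := hElow z (k + 1) (by omega)
    have h2 : E z (k + 1) ≤ B := hB ⟨k + 1, rfl⟩
    simp only [Nat.add_sub_cancel] at h1
    have h3 : ‖x k - z‖ ^ 2 ≤ 4 / (α - 2) * B := by
      rw [div_mul_eq_mul_div, le_div_iff₀ hα2]; nlinarith
    nlinarith [sq_nonneg (‖x k - z‖ - 1), norm_nonneg (x k - z)]
  -- rate
  have hc0 : Tendsto (fun k : ℕ => ((k : ℝ) - 1) ^ 2 * ‖d k‖ ^ 2) atTop (nhds 0) := by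
    refine ripa_conv _ (fun k : ℕ => 2 * ((k : ℝ) ^ 3 * ‖w k‖ ^ 2)) (K + 2) (fun k => by positivity)
      (hsw.mul_left 2) (fun k hk => ?_) ?_
    · have hkα := hKle k (by omega)
      have hk2 : (2 : ℝ) ≤ k := by linarith
      have hk0 : (0 : ℝ) < k := by linarith
      have e : (k : ℝ) • d (k + 1) = ((k : ℝ) - α) • d k - (k : ℝ) • w k := by
        rw [hw k (by omega), smul_sub, smul_smul]
        have : (k : ℝ) * (1 - α / k) = k - α := by field_simp
        rw [this]; abel
      have h1 : (k : ℝ) * ‖d (k + 1)‖ ≤ ((k : ℝ) - 2) * ‖d k‖ + k * ‖w k‖ := by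
        have h2 : ‖(k : ℝ) • d (k + 1)‖ ≤ ‖((k : ℝ) - α) • d k‖ + ‖(k : ℝ) • w k‖ := by
          rw [e]; exact norm_sub_le _ _
        rw [norm_smul, norm_smul, norm_smul, Real.norm_of_nonneg hk0.le,
          Real.norm_of_nonneg (by linarith)] at h2
        nlinarith [norm_nonneg (d k)]
      have h3 : ((k : ℝ) * ‖d (k + 1)‖) ^ 2 ≤ (((k : ℝ) - 2) * ‖d k‖ + k * ‖w k‖) ^ 2 :=
        pow_le_pow_left₀ (by positivity) h1 2
      obtain ⟨t, ht⟩ : ∃ t : ℝ, t = k - 2 := ⟨_, rfl⟩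
      have ht0 : 0 ≤ t := by linarith
      have hkt : (k : ℝ) = t + 2 := by linarith
      simp only [Nat.cast_add, Nat.cast_one, add_sub_cancel_right]
      rw [hkt] at h3 ⊢
      have n1 := norm_nonneg (d k)
      have n2 := norm_nonneg (w k)
      -- (t D + (t+2) W)^2 ≤ (t+1)^2 D^2 + 2 (t+2)^3 W^2
      have h4 : (t * ‖d k‖ + (t + 2) * ‖w k‖) ^ 2
          ≤ (t + 1) ^ 2 * ‖d k‖ ^ 2 + 2 * ((t + 2) ^ 3 * ‖w k‖ ^ 2) := by
        have q1 : 0 ≤ t * (‖d k‖ - (t + 2) * ‖w k‖) ^ 2 := by positivity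
        have q2 : 0 ≤ (t + 1) * ‖d k‖ ^ 2 := by positivity
        have q3 : 0 ≤ (t + 2) ^ 2 * ‖w k‖ ^ 2 * (t + 3) := by positivity
        nlinarith
      have e5 : t + 2 - 2 = t := by ring
      have e6 : t + 2 - 1 = t + 1 := by ring
      rw [e5] at h3
      rw [e6]
      nlinarith
    · refine Summable.of_nonneg_of_le (fun k => by positivity) (fun k => ?_) hsd
      rcases Nat.eq_zero_or_pos k with rfl | hk
      · simp
      have hk1 : (1 : ℝ) ≤ k := by exact_mod_cast hk
      rw [div_le_iff₀ (by linarith)]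
      have : ((k : ℝ) - 1) ^ 2 ≤ k * k := by nlinarith
      nlinarith [sq_nonneg ‖d k‖]
  have hd0 : Tendsto (fun k : ℕ => ((k : ℝ) - 1) * ‖d k‖) atTop (nhds 0) := by
    have h1 : Tendsto (fun k : ℕ => (((k : ℝ) - 1) * ‖d k‖) ^ 2) atTop (nhds 0) :=
      hc0.congr fun k => by ring
    have h2 := h1.sqrt
    rw [Real.sqrt_zero] at h2
    refine (tendsto_zero_iff_abs_tendsto_zero _).2 (h2.congr fun k => ?_)
    rw [Real.sqrt_sq_eq_abs]; rfl
  have hdn : Tendsto d atTop (nhds 0) := by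
    rw [tendsto_zero_iff_norm_tendsto_zero]
    refine squeeze_zero' (Eventually.of_forall fun k => norm_nonneg _) ?_ hd0
    filter_upwards [eventually_ge_atTop 2] with k hk
    have : (2 : ℝ) ≤ k := by exact_mod_cast hk
    nlinarith [norm_nonneg (d k)]
  -- residuals
  have hsv : Summable (fun k : ℕ => ‖m k • w k‖ ^ 2 / (k : ℝ)) := by
    refine Summable.of_nonneg_of_le (fun k => by positivity) (fun k => ?_)
      (hsw.mul_left ((κ + 1) ^ 2))
    rcases Nat.eq_zero_or_pos k with rfl | hk
    · simp
    have hk1 : (1 : ℝ) ≤ k := by exact_mod_cast hk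
    rw [div_le_iff₀ (by linarith), norm_smul, mul_pow, Real.norm_of_nonneg (hm0 k).le]
    have h1 : m k ≤ (κ + 1) * (k : ℝ) ^ 2 := by rw [hm]; nlinarith
    have h2 : m k ^ 2 ≤ ((κ + 1) * (k : ℝ) ^ 2) ^ 2 := pow_le_pow_left₀ (hm0 k).le h1 2
    calc m k ^ 2 * ‖w k‖ ^ 2 ≤ ((κ + 1) * (k : ℝ) ^ 2) ^ 2 * ‖w k‖ ^ 2 :=
          mul_le_mul_of_nonneg_right h2 (by positivity)
      _ = _ := by ring
  have hse : Summable (fun k : ℕ => ((k + 1 : ℕ) : ℝ) * ‖y (k + 1) - y k‖ ^ 2) := by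
    have h1 := (summable_nat_add_iff 1).2 hsd
    refine Summable.of_norm_bounded_eventually_nat ((h1.mul_left 8).add (hsd.mul_left 4)) ?_
    filter_upwards [eventually_ge_atTop K] with k hk
    have hkα := hKle k hk
    have hk1 := hK1 k hk
    have hk0 : (0 : ℝ) < k := by linarith
    have e : y (k + 1) - y k = d (k + 1) + ((1 - α / ((k + 1 : ℕ) : ℝ)) • d (k + 1))
        - (1 - α / (k : ℝ)) • d k := by
      rw [hy k hk1, hy (k + 1) (by omega), ← hd, ← hd, hd1]; abel
    have hβ : ∀ j : ℕ, K ≤ j → ‖(1 - α / (j : ℝ)) • d j‖ ≤ ‖d j‖ := by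
      intro j hj
      have hjα := hKle j hj
      have hj0 : (0 : ℝ) < j := by linarith
      have c1 : α / j ≤ 1 := by rw [div_le_one hj0]; exact hjα
      have c2 : 0 ≤ α / j := by positivity
      rw [norm_smul, Real.norm_of_nonneg (by linarith)]
      nlinarith [norm_nonneg (d j)]
    have h2 : ‖y (k + 1) - y k‖ ≤ 2 * ‖d (k + 1)‖ + ‖d k‖ := by
      rw [e]
      have := norm_sub_le (d (k + 1) + ((1 - α / ((k + 1 : ℕ) : ℝ)) • d (k + 1)))
        ((1 - α / (k : ℝ)) • d k)
      have t2 := norm_add_le (d (k + 1)) ((1 - α / ((k + 1 : ℕ) : ℝ)) • d (k + 1))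
      have t3 := hβ k hk
      have t4 := hβ (k + 1) (by omega)
      linarith
    have h3 : ‖y (k + 1) - y k‖ ^ 2 ≤ 8 * ‖d (k + 1)‖ ^ 2 + 2 * ‖d k‖ ^ 2 := by
      have := pow_le_pow_left₀ (norm_nonneg _) h2 2
      nlinarith [sq_nonneg (2 * ‖d (k + 1)‖ - ‖d k‖)]
    rw [Real.norm_of_nonneg (by positivity)]
    have h4 : ((k + 1 : ℕ) : ℝ) ≤ 2 * k := by push_cast; linarith
    have h5 := mul_le_mul_of_nonneg_left h3 (Nat.cast_nonneg (α := ℝ) (k + 1))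
    have h6 := mul_le_mul_of_nonneg_right h4 (sq_nonneg ‖d k‖)
    linarith
  have hv0 : Tendsto (fun k => ‖m k • w k‖ ^ 2) atTop (nhds 0) := by
    have h1 := (summable_nat_add_iff 1).2 hsv
    refine ripa_conv _ _ (K + 1) (fun k => by positivity)
      ((h1.mul_left 10).add (hse.mul_left 2)) (fun k hk => ?_) hsv
    have hk0 : (0 : ℝ) ≤ k := Nat.cast_nonneg k
    refine ripa_var (w k) (w (k + 1)) (y (k + 1) - y k) (m k) (m (k + 1)) ((k + 1 : ℕ) : ℝ)
      (by positivity) (hm0 k) ?_ ?_ ?_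
    · rw [hm, hm]; push_cast; nlinarith
    · have hm1 := hm0 (k + 1)
      rw [one_sub_div hm1.ne', div_le_div_iff₀ hm1 (by positivity), hm, hm]
      push_cast
      nlinarith [mul_nonneg hκ0.le hk0]
    · have h2 := hmon (hP (k + 1) (by omega)) (hP k (by omega))
      rw [← smul_sub, real_inner_smul_left] at h2
      have e : y (k + 1) - m (k + 1) • w (k + 1) - (y k - m k • w k)
        = y (k + 1) - y k - (m (k + 1) • w (k + 1) - m k • w k) := by abel
      rw [e] at h2
      by_contra hc
      push Not at hc
      have : 0 < s⁻¹ := by positivity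
      nlinarith
  have hv : Tendsto (fun k => m k • w k) atTop (nhds 0) := by
    rw [tendsto_zero_iff_norm_tendsto_zero]
    have h2 := hv0.sqrt
    rw [Real.sqrt_zero] at h2
    exact h2.congr fun k => Real.sqrt_sq (norm_nonneg _)
  have hwn : Tendsto w atTop (nhds 0) := by
    rw [tendsto_zero_iff_norm_tendsto_zero] at hv ⊢
    refine squeeze_zero (fun k => norm_nonneg _) (fun k => ?_) hv
    rw [norm_smul, Real.norm_of_nonneg (hm0 k).le]
    have : 1 ≤ m k := by
      have : 0 ≤ κ * (k : ℝ) ^ 2 := by positivity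
      rw [hm]; linarith
    nlinarith [norm_nonneg (w k)]
  have hyx : Tendsto (fun k => y k - x k) atTop (nhds 0) := by
    have h1 : Tendsto (fun k : ℕ => w k + d (k + 1)) atTop (nhds (0 + 0)) :=
      hwn.add ((tendsto_add_atTop_iff_nat 1).2 hdn)
    rw [add_zero] at h1
    refine h1.congr fun k => ?_
    rw [hwdef, hd1]; abel
  -- convergence of the distance to zeros
  have hlim : ∀ z, (0 : H) ∈ A z → ∃ L, Tendsto (fun k => ‖x k - z‖ ^ 2) atTop (nhds L) := by
    intro z hz
    obtain ⟨L, hL⟩ := (hLyap z hz).2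
    obtain ⟨M, hM⟩ := hbound z hz
    have hg : Tendsto (fun k : ℕ => ((k : ℝ) - 1) *
        (‖x k - z‖ ^ 2 / 2 - ‖x (k - 1) - z‖ ^ 2 / 2)) atTop (nhds 0) := by
      have h0 : Tendsto (fun k : ℕ => M * (((k : ℝ) - 1) * ‖d k‖)) atTop (nhds 0) := by
        simpa using hd0.const_mul M
      refine squeeze_zero_norm' ?_ h0
      filter_upwards [eventually_ge_atTop 1] with k hk
      have hk1 : (1 : ℝ) ≤ k := by exact_mod_cast hk
      have a1 := hM k
      have a2 := hM (k - 1)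
      have t1 : |‖x k - z‖ - ‖x (k - 1) - z‖| ≤ ‖d k‖ := by
        have := abs_norm_sub_norm_le (x k - z) (x (k - 1) - z)
        have e : x k - z - (x (k - 1) - z) = d k := by rw [hd]; abel
        rwa [e] at this
      rw [Real.norm_eq_abs, abs_mul, abs_of_nonneg (by linarith : (0 : ℝ) ≤ (k : ℝ) - 1)]
      have e : ‖x k - z‖ ^ 2 / 2 - ‖x (k - 1) - z‖ ^ 2 / 2
        = ((‖x k - z‖ + ‖x (k - 1) - z‖) / 2) * (‖x k - z‖ - ‖x (k - 1) - z‖) := by ring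
      have h3 : |‖x k - z‖ ^ 2 / 2 - ‖x (k - 1) - z‖ ^ 2 / 2| ≤ M * ‖d k‖ := by
        rw [e, abs_mul, abs_of_nonneg (by positivity)]
        exact mul_le_mul (by linarith) t1 (abs_nonneg _) (le_trans (norm_nonneg _) a1)
      calc ((k : ℝ) - 1) * |‖x k - z‖ ^ 2 / 2 - ‖x (k - 1) - z‖ ^ 2 / 2|
          ≤ ((k : ℝ) - 1) * (M * ‖d k‖) := mul_le_mul_of_nonneg_left h3 (by linarith)
        _ = _ := by ring
    have h1 := (((hL.sub hg).sub (hc0.const_mul η)).mul_const (2 / (α - 1)))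
    have h2 := (tendsto_add_atTop_iff_nat 1).2 h1
    refine ⟨_, h2.congr fun k => ?_⟩
    have : α - 1 ≠ 0 := by intro h; linarith
    rw [hE]
    simp only [Nat.add_sub_cancel]
    field_simp
    ring
  obtain ⟨M, hM⟩ := hbound z0 hz0
  have hxb : ∀ᶠ k in atTop, ‖x k‖ ≤ M + ‖z0‖ := by
    refine Eventually.of_forall fun k => ?_
    have := norm_add_le (x k - z0) z0
    rw [sub_add_cancel] at this
    linarith [hM k]
  refine ⟨?_, ?_, ?_⟩
  · have h1 := (tendsto_add_atTop_iff_nat 1).2 hd0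
    obtain ⟨C, hC⟩ := h1.bddAbove_range
    refine ⟨C, fun k hk => ?_⟩
    have hk0 : (0 : ℝ) < k := by exact_mod_cast hk
    have h2 : (((k + 1 : ℕ) : ℝ) - 1) * ‖d (k + 1)‖ ≤ C := hC ⟨k, rfl⟩
    rw [← hd1, le_div_iff₀ hk0]
    push_cast at h2
    linarith
  · exact hsd.congr fun k => by rw [hd]
  · obtain ⟨p, hpS, hp⟩ := ripa_opial {z | (0 : H) ∈ A z} x (M + ‖z0‖) hxb hlim (by
      intro U p hU hp
      refine hmax p 0 fun q v hqv => ?_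
      have h1 : ∀ᶠ k in (U : Filter ℕ), 0 ≤ ⟪s⁻¹ • w k - v, y k - m k • w k - q⟫ := by
        filter_upwards [hU (eventually_ge_atTop 1)] with k hk
        exact hmon (hP k hk) hqv
      -- split: ⟪s⁻¹ w, P - q⟫ → 0 and ⟪v, P - q⟫ → ⟪v, p - q⟫
      have hr : Tendsto (fun k => (y k - x k) - m k • w k) (U : Filter ℕ) (nhds 0) := by
        have := (hyx.sub hv).mono_left hU
        rwa [sub_zero] at this
      have hwU : Tendsto (fun k => s⁻¹ • w k) (U : Filter ℕ) (nhds 0) := by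
        have := (hwn.const_smul s⁻¹).mono_left hU
        rwa [smul_zero] at this
      have h2 : Tendsto (fun k => ⟪s⁻¹ • w k, x k⟫) (U : Filter ℕ) (nhds 0) := by
        have h3 : Tendsto (fun k => ‖s⁻¹ • w k‖ * (M + ‖z0‖)) (U : Filter ℕ) (nhds 0) := by
          simpa using hwU.norm.mul_const (M + ‖z0‖)
        refine squeeze_zero_norm' ?_ h3
        filter_upwards [hU hxb] with k hk
        exact (norm_inner_le_norm _ _).trans (mul_le_mul_of_nonneg_left hk (norm_nonneg _))
      have h4 : Tendsto (fun k => ⟪s⁻¹ • w k, (y k - x k) - m k • w k - q⟫) (U : Filter ℕ)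
          (nhds ⟪(0 : H), 0 - q⟫) := hwU.inner (hr.sub_const q)
      have h5 : Tendsto (fun k => ⟪v, (y k - x k) - m k • w k - q⟫) (U : Filter ℕ)
          (nhds ⟪v, 0 - q⟫) := tendsto_const_nhds.inner (hr.sub_const q)
      have h6 := ((h2.add h4).sub h5).sub (hp v)
      have h7 : Tendsto (fun k => ⟪s⁻¹ • w k - v, y k - m k • w k - q⟫) (U : Filter ℕ)
          (nhds ⟪0 - v, p - q⟫) := by
        convert h6 using 1
        · funext k
          have e : y k - m k • w k - q = x k + ((y k - x k) - m k • w k - q) := by abel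
          rw [e, inner_sub_left, inner_add_right, inner_add_right, real_inner_comm v (x k)]
          ring
        · congr 1
          rw [inner_zero_left, zero_sub, zero_sub, inner_neg_left, inner_neg_right,
            inner_sub_right, real_inner_comm v p]
          ring
      exact ge_of_tendsto h7 h1)
    refine ⟨p, hpS, hp, fun v => ?_⟩
    have h1 : Tendsto (fun k => ⟪y k - x k, v⟫) atTop (nhds ⟪(0 : H), v⟫) :=
      hyx.inner tendsto_const_nhds
    have h2 := h1.add (hp v)
    rw [inner_zero_left, zero_add] at h2
    refine h2.congr fun k => ?_
    rw [← inner_add_left, sub_add_cancel]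
end
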